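/- arXiv:2112.06526 — 3 statements merged into one kernel-verified Lean document; each statement's English description precedes it below -/
import Mathlib

section
/- There exist a constant C > 0 and q₀ ∈ ℕ such that for all integers q ≥ q₀, all n ∈ ℕ and all integers m ≥ 0, the number of q-basic subgraphs of the complete graph K_n on [n] having exactly m edges is at most C · (3q)³ · exp( m log n − (q/3) log(q/3) + 16 q ). -/
open scoped BigOperators Classical
open Finset Filter

noncomputable section

/-- Number of edges of a finite simple graph. -/
def edgeCount {V : Type*} [Fintype V] (G : SimpleGraph V) : ℕ :=
  (Finset.univ.filter (fun e : Sym2 V => e ∈ G.edgeSet)).card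

/-- Number of triangles (3-cliques) of a finite simple graph. -/
def triangleCount {V : Type*} [Fintype V] (G : SimpleGraph V) : ℕ :=
  (Finset.univ.filter (fun s : Finset V => G.IsNClique 3 s)).card

/-- Number of vertices lying in at least one triangle. -/
def vT {V : Type*} [Fintype V] (G : SimpleGraph V) : ℕ :=
  (Finset.univ.filter (fun v : V => ∃ u w : V, G.Adj v u ∧ G.Adj v w ∧ G.Adj u w)).card

/-- Degree of a vertex. -/
def deg {V : Type*} [Fintype V] (G : SimpleGraph V) (v : V) : ℕ :=
  (Finset.univ.filter (fun u => G.Adj v u)).card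

/-- Probability that the Erdős–Rényi random graph `G_{n,p}` equals the graph `G`. -/
def graphProb (n : ℕ) (p : ℝ) (G : SimpleGraph (Fin n)) : ℝ :=
  p ^ edgeCount G * (1 - p) ^ (n.choose 2 - edgeCount G)

/-- Probability of an event under the Erdős–Rényi measure. -/
def prob (n : ℕ) (p : ℝ) (A : Set (SimpleGraph (Fin n))) : ℝ :=
  ∑ G : SimpleGraph (Fin n), if G ∈ A then graphProb n p G else 0

/-- Conditional probability `P(A | B)` (with the convention `0` when `P(B) = 0`). -/
def condProb (n : ℕ) (p : ℝ) (A B : Set (SimpleGraph (Fin n))) : ℝ :=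
  prob n p (A ∩ B) / prob n p B

/-- Conditional expectation `E_G[f]` given that every edge of `G` is present. -/
def condExpect (n : ℕ) (p : ℝ) (G : SimpleGraph (Fin n)) (f : SimpleGraph (Fin n) → ℝ) : ℝ :=
  (∑ H : SimpleGraph (Fin n), if G ≤ H then graphProb n p H * f H else 0) /
    prob n p {H | G ≤ H}

/-- `E_G(T)`: conditional expectation of the number of triangles. -/
def condTri (n : ℕ) (p : ℝ) (G : SimpleGraph (Fin n)) : ℝ :=
  condExpect n p G (fun H => (triangleCount H : ℝ))

/-- The variational quantity `Φ_{n,p,k}(a)`. -/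
def Phi (n : ℕ) (p k a : ℝ) : ℝ :=
  sInf {x : ℝ | ∃ G : SimpleGraph (Fin n),
    a * k ≤ condTri n p G ∧ x = (edgeCount G : ℝ) * Real.log (1 / p)}

/-- A seed, with parameters `a, w, C, k` and edge probability `p`. -/
def IsSeed (n : ℕ) (p a w C k : ℝ) (G : SimpleGraph (Fin n)) : Prop :=
  (a - w) * k ≤ condTri n p G ∧
  (edgeCount G : ℝ) ≤ C * a * w⁻¹ * k ^ ((2 : ℝ) / 3) * Real.log (1 / p)

/-- A core, with parameters `a, w, C, k` and edge probability `p`. -/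
def IsCore (n : ℕ) (p a w C k : ℝ) (G : SimpleGraph (Fin n)) : Prop :=
  (a - 2 * w) * k ≤ condTri n p G ∧
  (edgeCount G : ℝ) ≤ C * a * w⁻¹ * k ^ ((2 : ℝ) / 3) * Real.log (1 / p) ∧
  ∀ e ∈ G.edgeSet,
    w ^ 2 * k ^ ((1 : ℝ) / 3) / (C * a * Real.log (1 / p)) ≤
      condTri n p G - condTri n p (G.deleteEdges {e})

/-- A `q`-basic graph. -/
def qBasic {V : Type*} [Fintype V] (q : ℕ) (G : SimpleGraph V) : Prop :=
  vT G = q ∧ ∀ e ∈ G.edgeSet, vT (G.deleteEdges {e}) < q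

/-- Containment of a `(δ, m)`-near-clique. -/
def containsNearClique {n : ℕ} (H : SimpleGraph (Fin n)) (δ m : ℝ) : Prop :=
  ∃ H' : SimpleGraph (Fin n), H' ≤ H ∧ 0 < edgeCount H' ∧
    ∀ v : Fin n, (∃ u, H'.Adj v u) →
      (1 - 4 * δ ^ ((1 : ℝ) / 2)) * (2 * m) ^ ((1 : ℝ) / 2) ≤ (deg H' v : ℝ)

/-- Partition function of the exponential random graph model tilted by `exp(b · V_T)`. -/
def ergmZ (n : ℕ) (p b : ℝ) : ℝ :=
  ∑ G : SimpleGraph (Fin n), graphProb n p G * Real.exp (b * vT G)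

/-- Probability of an event under the exponential random graph measure. -/
def ergmProb (n : ℕ) (p b : ℝ) (A : Set (SimpleGraph (Fin n))) : ℝ :=
  (∑ G : SimpleGraph (Fin n),
    if G ∈ A then graphProb n p G * Real.exp (b * vT G) else 0) / ergmZ n p b
def decodeG {n : ℕ} (A : Finset (Fin n × Sym2 (Fin n))) : SimpleGraph (Fin n) :=
  SimpleGraph.fromEdgeSet {e | (∃ p ∈ A, e = p.2) ∨ ∃ p ∈ A, ∃ u ∈ p.2, e = s(p.1, u)}

def codes (n t r : ℕ) : Finset (Finset (Fin n × Sym2 (Fin n))) :=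
  ((Finset.univ : Finset (Sym2 (Fin n))).powersetCard r).biUnion
    (fun R => ((Finset.univ : Finset (Fin n)) ×ˢ R).powersetCard t)

lemma card_codes_le (n t r : ℕ) :
    (codes n t r).card ≤ (n ^ 2).choose r * (n * r).choose t := by
  refine (Finset.card_biUnion_le_card_mul _ _ ((n * r).choose t) ?_).trans ?_
  · intro R hR
    rw [Finset.mem_powersetCard] at hR
    rw [Finset.card_powersetCard, Finset.card_product, hR.2]
    simp
  · refine Nat.mul_le_mul_right _ ?_
    rw [Finset.card_powersetCard]
    apply Nat.choose_le_choose
    rw [Finset.card_univ, Sym2.card, Fintype.card_fin, Nat.choose_two_right]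
    apply Nat.div_le_of_le_mul
    rcases n with _ | n
    · simp
    · simp only [Nat.add_sub_cancel]
      nlinarith

lemma term_bound (n t r : ℕ) (hrt : r ≤ t) (htn : t ≤ n) :
    (((n ^ 2).choose r * (n * r).choose t : ℕ) : ℝ) ≤
      (n : ℝ) ^ (2 * t + r) * (Real.exp r / (t.factorial : ℝ)) := by
  have h1 : ((n ^ 2).choose r : ℝ) ≤ ((n ^ 2 : ℕ) : ℝ) ^ r / (r.factorial : ℝ) :=
    Nat.choose_le_pow_div r (n ^ 2)
  have h2 : ((n * r).choose t : ℝ) ≤ ((n * r : ℕ) : ℝ) ^ t / (t.factorial : ℝ) :=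
    Nat.choose_le_pow_div t (n * r)
  have h3 : (r : ℝ) ^ r / (r.factorial : ℝ) ≤ Real.exp r :=
    Real.pow_div_factorial_le_exp _ (by positivity) r
  obtain ⟨s, rfl⟩ := Nat.exists_eq_add_of_le hrt
  have h4 : (r : ℝ) ^ s ≤ (n : ℝ) ^ s := by
    gcongr
    omega
  push_cast at h1 h2 ⊢
  calc _ ≤ (((n : ℝ) ^ 2) ^ r / (r.factorial : ℝ)) *
        (((n : ℝ) * r) ^ (r + s) / ((r + s).factorial : ℝ)) := by gcongr
    _ = ((n : ℝ) ^ (3 * r + s) * (r : ℝ) ^ s) *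
        (((r : ℝ) ^ r / (r.factorial : ℝ)) / ((r + s).factorial : ℝ)) := by
      ring
    _ ≤ ((n : ℝ) ^ (3 * r + s) * (n : ℝ) ^ s) *
        (Real.exp r / ((r + s).factorial : ℝ)) := by gcongr
    _ = _ := by ring

lemma inv_factorial_bound (q t : ℕ) (hq : 3 ≤ q) (h : q ≤ 3 * t) (htq : t ≤ q) :
    (1 : ℝ) / (t.factorial : ℝ) ≤ Real.exp (q - (q : ℝ) / 3 * Real.log ((q : ℝ) / 3)) := by
  have h3 : (t : ℝ) ^ t / (t.factorial : ℝ) ≤ Real.exp t :=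
    Real.pow_div_factorial_le_exp _ (by positivity) t
  have ht : (0 : ℝ) < t := by
    have : 0 < t := by omega
    exact_mod_cast this
  have hqt : (q : ℝ) / 3 ≤ t := by
    have : (q : ℝ) ≤ 3 * t := by exact_mod_cast h
    linarith
  have hq1 : (1 : ℝ) ≤ (q : ℝ) / 3 := by
    have : (3 : ℝ) ≤ q := by exact_mod_cast hq
    linarith
  have htq' : (t : ℝ) ≤ q := by exact_mod_cast htq
  have h5 : (q : ℝ) / 3 * Real.log ((q : ℝ) / 3) ≤ t * Real.log t := by
    apply mul_le_mul hqt (Real.log_le_log (by linarith) hqt) (Real.log_nonneg hq1) ht.le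
  have h6 : (t : ℝ) ^ t = Real.exp (t * Real.log t) := by
    rw [mul_comm, Real.exp_mul, Real.exp_log ht, Real.rpow_natCast]
  have h7 : (1 : ℝ) / (t.factorial : ℝ) ≤ Real.exp (t - t * Real.log t) := by
    rw [Real.exp_sub, ← h6, le_div_iff₀ (by positivity)]
    calc _ = (t : ℝ) ^ t / (t.factorial : ℝ) := by ring
      _ ≤ _ := h3
  exact h7.trans (Real.exp_le_exp.2 (by linarith))

lemma exists_code {n q m : ℕ} (G : SimpleGraph (Fin n)) (hG : qBasic q G)
    (hm : edgeCount G = m) :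
    ∃ t r : ℕ, r ≤ t ∧ t ≤ q ∧ q ≤ 3 * t ∧ 2 * t + r = m ∧
      ∃ A ∈ codes n t r, decodeG A = G := by
  obtain ⟨hv, he⟩ := hG
  set W : Finset (Fin n) :=
    Finset.univ.filter (fun v => ∃ u w, G.Adj v u ∧ G.Adj v w ∧ G.Adj u w) with hW
  have hWc : W.card = q := by
    rw [← hv, hW, vT]
    congr
  -- covering families of triangles
  let Cov : Finset (Finset (Fin n)) → Prop := fun S =>
    (∀ T ∈ S, G.IsNClique 3 T) ∧ ∀ v ∈ W, ∃ T ∈ S, v ∈ T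
  have hne : ∃ S, Cov S := by
    refine ⟨Finset.univ.filter (fun T => G.IsNClique 3 T), ?_, ?_⟩
    · intro T hT
      exact (Finset.mem_filter.1 hT).2
    · intro v hv
      obtain ⟨u, w, h1, h2, h3⟩ := (Finset.mem_filter.1 hv).2
      refine ⟨{v, u, w}, ?_, by simp⟩
      simp only [Finset.mem_filter, Finset.mem_univ, true_and]
      exact SimpleGraph.is3Clique_triple_iff.2 ⟨h1, h2, h3⟩
  obtain ⟨S, hS⟩ := exists_minimal_of_wellFoundedLT Cov hne
  obtain ⟨⟨hS1, hS2⟩, hSmin⟩ := hS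
  -- private vertices
  have hpriv : ∀ T : S, ∃ v u w : Fin n, v ∈ W ∧ (T : Finset (Fin n)) = {v, u, w} ∧
      G.Adj v u ∧ G.Adj v w ∧ G.Adj u w ∧ ∀ T' ∈ S, v ∈ T' → T' = T := by
    rintro ⟨T, hT⟩
    have hnot : ¬ Cov (S.erase T) := by
      intro h
      have := hSmin h (Finset.erase_subset _ _) hT
      simp at this
    have : ∃ v ∈ W, ∀ T' ∈ S, v ∈ T' → T' = T := by
      by_contra hcon
      push Not at hcon
      apply hnot
      refine ⟨fun T' hT' => hS1 _ (Finset.mem_of_mem_erase hT'), ?_⟩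
      intro v hv
      obtain ⟨T', h1, h2, h3⟩ := hcon v hv
      exact ⟨T', Finset.mem_erase.2 ⟨h3, h1⟩, h2⟩
    obtain ⟨v, hvW, hv⟩ := this
    have hvT : v ∈ T := by
      obtain ⟨T', h1, h2⟩ := hS2 v hvW
      rw [← hv T' h1 h2]
      exact h2
    obtain ⟨a, b, c, hab, hac, hbc, rfl⟩ := SimpleGraph.is3Clique_iff.1 (hS1 T hT)
    simp only [Finset.mem_insert, Finset.mem_singleton] at hvT
    rcases hvT with rfl | rfl | rfl
    · exact ⟨v, b, c, hvW, rfl, hab, hac, hbc, hv⟩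
    · refine ⟨v, a, c, hvW, ?_, hab.symm, hbc, hac, hv⟩
      ext x; simp; tauto
    · refine ⟨v, a, b, hvW, ?_, hac.symm, hbc.symm, hab, hv⟩
      ext x; simp; tauto
  choose v u w hvW hT hvu hvw huw huniq using hpriv
  have hmem : ∀ T T' : S, v T ∈ (T' : Finset (Fin n)) → T = T' := by
    intro T T' h
    exact Subtype.ext (huniq T T' T'.2 h).symm
  have hvv : ∀ T T' : S, v T = v T' → T = T' := by
    intro T T' h
    apply hmem
    rw [hT T', h]
    simp
  have hvu' : ∀ T T' : S, v T = u T' → False := by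
    intro T T' h
    have := hmem T T' (by rw [hT T', h]; simp)
    subst this
    exact (hvu T).ne h
  have hvw' : ∀ T T' : S, v T = w T' → False := by
    intro T T' h
    have := hmem T T' (by rw [hT T', h]; simp)
    subst this
    exact (hvw T).ne h
  -- every edge lies in a triangle of the family
  have hedge : ∀ a b, G.Adj a b → ∃ T ∈ S, a ∈ T ∧ b ∈ T := by
    intro a b hab
    by_contra hcon
    push Not at hcon
    have hlt := he s(a, b) hab
    apply absurd hlt
    rw [not_lt, ← hWc]
    apply Finset.card_le_card
    intro x hx
    obtain ⟨T, hTS, hxT⟩ := hS2 x hx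
    have hstay : ∀ y ∈ T, ∀ z ∈ T, G.Adj y z → (G.deleteEdges {s(a, b)}).Adj y z := by
      intro y hy z hz hyz
      rw [SimpleGraph.deleteEdges_adj]
      refine ⟨hyz, ?_⟩
      intro h
      rw [Set.mem_singleton_iff, Sym2.eq_iff] at h
      rcases h with ⟨rfl, rfl⟩ | ⟨rfl, rfl⟩
      · exact hcon T hTS hy hz
      · exact hcon T hTS hz hy
    simp only [Finset.mem_filter, Finset.mem_univ, true_and]
    obtain ⟨a', b', c', h1, h2, h3, rfl⟩ := SimpleGraph.is3Clique_iff.1 (hS1 T hTS)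
    have k1 := hstay a' (by simp) b' (by simp) h1
    have k2 := hstay a' (by simp) c' (by simp) h2
    have k3 := hstay b' (by simp) c' (by simp) h3
    simp only [Finset.mem_insert, Finset.mem_singleton] at hxT
    rcases hxT with rfl | rfl | rfl
    · exact ⟨_, _, k1, k2, k3⟩
    · exact ⟨_, _, k1.symm, k3, k2⟩
    · exact ⟨_, _, k2.symm, k3.symm, k1⟩
  let A : Finset (Fin n × Sym2 (Fin n)) := Finset.univ.image (fun T : S => (v T, s(u T, w T)))
  let R : Finset (Sym2 (Fin n)) := Finset.univ.image (fun T : S => s(u T, w T))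
  let E1 : Finset (Sym2 (Fin n)) := Finset.univ.image (fun T : S => s(v T, u T))
  let E2 : Finset (Sym2 (Fin n)) := Finset.univ.image (fun T : S => s(v T, w T))
  have hSc : Fintype.card S = S.card := Fintype.card_coe S
  have hAc : A.card = S.card := by
    rw [← hSc, ← Finset.card_univ]
    apply Finset.card_image_of_injective
    intro T T' h
    exact hvv _ _ (congrArg Prod.fst h)
  have hRc : R.card ≤ S.card := by
    rw [← hSc, ← Finset.card_univ]
    exact Finset.card_image_le
  have hE1 : E1.card = S.card := by
    rw [← hSc, ← Finset.card_univ]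
    apply Finset.card_image_of_injective
    intro T T' h
    rcases Sym2.eq_iff.1 h with ⟨h1, _⟩ | ⟨h1, _⟩
    · exact hvv _ _ h1
    · exact (hvu' _ _ h1).elim
  have hE2 : E2.card = S.card := by
    rw [← hSc, ← Finset.card_univ]
    apply Finset.card_image_of_injective
    intro T T' h
    rcases Sym2.eq_iff.1 h with ⟨h1, _⟩ | ⟨h1, _⟩
    · exact hvv _ _ h1
    · exact (hvw' _ _ h1).elim
  have hadj : ∀ a b, G.Adj a b ↔ ∃ T : S, s(a, b) = s(u T, w T) ∨ s(a, b) = s(v T, u T) ∨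
      s(a, b) = s(v T, w T) := by
    intro a b
    constructor
    · intro hab
      obtain ⟨T, hTS, ha, hb⟩ := hedge a b hab
      refine ⟨⟨T, hTS⟩, ?_⟩
      have hTT := hT ⟨T, hTS⟩
      simp only at hTT
      rw [hTT] at ha hb
      simp only [Finset.mem_insert, Finset.mem_singleton] at ha hb
      have := hab.ne
      simp only [Sym2.eq_iff]
      rcases ha with ha | ha | ha <;> rcases hb with hb | hb | hb <;> first
        | exact absurd (ha.trans hb.symm) this
        | tauto
    · rintro ⟨T, h | h | h⟩ <;> rw [← SimpleGraph.mem_edgeSet, h, SimpleGraph.mem_edgeSet]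
      · exact huw T
      · exact hvu T
      · exact hvw T
  have hEG : Finset.univ.filter (fun e : Sym2 (Fin n) => e ∈ G.edgeSet) = (R ∪ E1) ∪ E2 := by
    ext e
    induction e using Sym2.ind with
    | _ a b =>
      simp only [Finset.mem_filter, Finset.mem_univ, true_and, SimpleGraph.mem_edgeSet, hadj,
        Finset.mem_union, R, E1, E2, Finset.mem_image, exists_or, @eq_comm _ s(a, b), or_assoc]
  have hd1 : Disjoint R E1 := by
    rw [Finset.disjoint_left]
    intro e h1 h2
    obtain ⟨T, _, rfl⟩ := Finset.mem_image.1 h1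
    obtain ⟨T', _, h⟩ := Finset.mem_image.1 h2
    rcases Sym2.eq_iff.1 h with ⟨h1, _⟩ | ⟨h1, _⟩
    · exact hvu' _ _ h1
    · exact hvw' _ _ h1
  have hd2 : Disjoint (R ∪ E1) E2 := by
    rw [Finset.disjoint_left]
    intro e h1 h2
    obtain ⟨T', _, rfl⟩ := Finset.mem_image.1 h2
    rcases Finset.mem_union.1 h1 with h1 | h1
    · obtain ⟨T, _, h⟩ := Finset.mem_image.1 h1
      rcases Sym2.eq_iff.1 h.symm with ⟨h1, _⟩ | ⟨h1, _⟩
      · exact hvu' _ _ h1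
      · exact hvw' _ _ h1
    · obtain ⟨T, _, h⟩ := Finset.mem_image.1 h1
      rcases Sym2.eq_iff.1 h with ⟨h1, h2⟩ | ⟨h1, _⟩
      · have := hvv _ _ h1
        subst this
        exact (huw T).ne h2
      · exact hvw' _ _ h1
  refine ⟨S.card, R.card, hRc, ?_, ?_, ?_, A, ?_, ?_⟩
  · rw [← hSc, ← Finset.card_univ, ← hWc]
    apply Finset.card_le_card_of_injOn v
    · intro T _
      exact hvW T
    · intro T _ T' _ h
      exact hvv _ _ h
  · rw [← hWc, mul_comm]
    have hsub : W ⊆ S.biUnion id := by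
      intro x hx
      obtain ⟨T, h1, h2⟩ := hS2 x hx
      exact Finset.mem_biUnion.2 ⟨T, h1, h2⟩
    refine (Finset.card_le_card hsub).trans ?_
    apply Finset.card_biUnion_le_card_mul
    intro T hTS
    exact (hS1 T hTS).card_eq.le
  · rw [← hm, edgeCount, hEG, Finset.card_union_of_disjoint hd2, Finset.card_union_of_disjoint hd1,
      hE1, hE2]
    ring
  · refine Finset.mem_biUnion.2 ⟨R, Finset.mem_powersetCard.2 ⟨Finset.subset_univ _, rfl⟩, ?_⟩
    refine Finset.mem_powersetCard.2 ⟨?_, hAc⟩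
    intro p hp
    obtain ⟨T, _, rfl⟩ := Finset.mem_image.1 hp
    exact Finset.mem_product.2 ⟨Finset.mem_univ _,
      Finset.mem_image.2 ⟨T, Finset.mem_univ _, rfl⟩⟩
  · ext a b
    rw [decodeG, SimpleGraph.fromEdgeSet_adj]
    constructor
    · rintro ⟨h | h, _⟩
      · obtain ⟨p, hp, h⟩ := h
        obtain ⟨T, _, rfl⟩ := Finset.mem_image.1 hp
        exact (hadj a b).2 ⟨T, Or.inl h⟩
      · obtain ⟨p, hp, x, hx, h⟩ := h
        obtain ⟨T, _, rfl⟩ := Finset.mem_image.1 hp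
        rcases Sym2.mem_iff.1 hx with rfl | rfl
        · exact (hadj a b).2 ⟨T, Or.inr (Or.inl h)⟩
        · exact (hadj a b).2 ⟨T, Or.inr (Or.inr h)⟩
    · intro hab
      refine ⟨?_, hab.ne⟩
      obtain ⟨T, h⟩ := (hadj a b).1 hab
      have hTA : (v T, s(u T, w T)) ∈ A := Finset.mem_image.2 ⟨T, Finset.mem_univ _, rfl⟩
      rcases h with h | h | h
      · exact Or.inl ⟨_, hTA, h⟩
      · exact Or.inr ⟨_, hTA, u T, Sym2.mem_mk_left _ _, h⟩
      · exact Or.inr ⟨_, hTA, w T, Sym2.mem_mk_right _ _, h⟩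

/-- **The number of `q`-basic graphs with `m` edges.** -/
theorem qBasic_count_bound :
    ∃ C : ℝ, 0 < C ∧ ∃ q₀ : ℕ, ∀ q ≥ q₀, ∀ n m : ℕ,
      ((Finset.univ.filter (fun G : SimpleGraph (Fin n) =>
            qBasic q G ∧ edgeCount G = m)).card : ℝ) ≤
        C * (3 * q : ℝ) ^ 3 *
          Real.exp ((m : ℝ) * Real.log n - (q : ℝ) / 3 * Real.log ((q : ℝ) / 3) + 16 * q) := by
  refine ⟨1, one_pos, 3, ?_⟩
  intro q hq n m
  set F := Finset.univ.filter (fun G : SimpleGraph (Fin n) => qBasic q G ∧ edgeCount G = m) with hF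
  set B : ℝ := Real.exp ((m : ℝ) * Real.log n - (q : ℝ) / 3 * Real.log ((q : ℝ) / 3) + 16 * q)
    with hB
  have hq3 : (3 : ℝ) ≤ q := by exact_mod_cast hq
  have hBpos : 0 < B := Real.exp_pos _
  have hpoly : (1 : ℝ) ≤ (3 * q : ℝ) ^ 3 := one_le_pow₀ (by linarith)
  have key : (F.card : ℝ) ≤ B := by
    rcases F.eq_empty_or_nonempty with h0 | ⟨G0, hG0⟩
    · rw [h0]
      simpa using hBpos.le
    have hqn : q ≤ n := by
      have h1 := (Finset.mem_filter.1 hG0).2.1.1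
      rw [← h1, vT]
      refine (Finset.card_le_univ _).trans ?_
      simp
    have hn : (0 : ℝ) < n := by
      have : 0 < n := by omega
      exact_mod_cast this
    set I := (Finset.range (q + 1)).filter (fun t => q ≤ 3 * t ∧ 2 * t ≤ m ∧ m - 2 * t ≤ t)
      with hI
    have hsub : F ⊆ I.biUnion (fun t => (codes n t (m - 2 * t)).image decodeG) := by
      intro G hG
      obtain ⟨h1, h2⟩ := (Finset.mem_filter.1 hG).2
      obtain ⟨t, r, hrt, htq, hq3, hm, A, hA, hAG⟩ := exists_code G h1 h2
      have hr : r = m - 2 * t := by omega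
      subst hr
      refine Finset.mem_biUnion.2 ⟨t, ?_, Finset.mem_image.2 ⟨A, hA, hAG⟩⟩
      rw [hI, Finset.mem_filter, Finset.mem_range]
      omega
    set D : ℝ := (n : ℝ) ^ m * (Real.exp q *
      Real.exp (q - (q : ℝ) / 3 * Real.log ((q : ℝ) / 3))) with hD
    have hterm : ∀ t ∈ I, (((codes n t (m - 2 * t)).image decodeG).card : ℝ) ≤ D := by
      intro t ht
      rw [hI, Finset.mem_filter, Finset.mem_range] at ht
      obtain ⟨h1, h2, h3, h4⟩ := ht
      have e1 : (((codes n t (m - 2 * t)).image decodeG).card : ℝ) ≤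
          (((n ^ 2).choose (m - 2 * t) * (n * (m - 2 * t)).choose t : ℕ) : ℝ) := by
        exact_mod_cast Finset.card_image_le.trans (card_codes_le n t (m - 2 * t))
      refine e1.trans ((term_bound n t _ h4 (by omega)).trans ?_)
      have e2 : 2 * t + (m - 2 * t) = m := by omega
      rw [e2, hD, div_eq_mul_one_div]
      have e3 : Real.exp ((m - 2 * t : ℕ) : ℝ) ≤ Real.exp q := by
        apply Real.exp_le_exp.2
        have : m - 2 * t ≤ q := by omega
        exact_mod_cast this
      have e4 := inv_factorial_bound q t hq h2 (by omega)
      gcongr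
    have hDpos : 0 ≤ D := by positivity
    have hIc : (I.card : ℝ) ≤ Real.exp q := by
      have : I.card ≤ q + 1 := by
        refine (Finset.card_filter_le _ _).trans ?_
        simp
      have h' : (I.card : ℝ) ≤ q + 1 := by exact_mod_cast this
      exact h'.trans (Real.add_one_le_exp _)
    calc (F.card : ℝ) ≤ ∑ t ∈ I, (((codes n t (m - 2 * t)).image decodeG).card : ℝ) := by
          exact_mod_cast (Finset.card_le_card hsub).trans Finset.card_biUnion_le
      _ ≤ ∑ _t ∈ I, D := Finset.sum_le_sum hterm
      _ = I.card * D := by rw [Finset.sum_const, nsmul_eq_mul]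
      _ ≤ Real.exp q * D := by gcongr
      _ = Real.exp ((m : ℝ) * Real.log n - (q : ℝ) / 3 * Real.log ((q : ℝ) / 3) + 3 * q) := by
          have : (n : ℝ) ^ m = Real.exp (m * Real.log n) := by
            rw [mul_comm, Real.exp_mul, Real.exp_log hn, Real.rpow_natCast]
          rw [hD, this, ← Real.exp_add, ← Real.exp_add, ← Real.exp_add]
          congr 1
          ring
      _ ≤ B := Real.exp_le_exp.2 (by linarith)
  calc (F.card : ℝ) ≤ B := key
    _ ≤ 1 * (3 * q : ℝ) ^ 3 * B := by nlinarith
end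
end

section
/- Fix λ > 0 and set p_n = λ/n. There exist a constant C > 0 and q₀ ∈ ℕ such that for all integers q ≥ q₀ and all n > λ: P(G_{n,p_n} contains a q-basic subgraph of K_n) ≤ exp( −(q/3) log(q/3) + C q ). -/
open scoped BigOperators Classical
open Finset Filter

noncomputable section

/-- The edges spanned by a vertex set. -/
def eT {n : ℕ} (t : Finset (Fin n)) : Finset (Sym2 (Fin n)) :=
  t.offDiag.image (fun x => s(x.1, x.2))

def vL {n : ℕ} : List (Finset (Fin n)) → Finset (Fin n)
  | [] => ∅
  | t :: L => t ∪ vL L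

def eL {n : ℕ} : List (Finset (Fin n)) → Finset (Sym2 (Fin n))
  | [] => ∅
  | t :: L => eT t ∪ eL L

/-- Sequences of `k` triangles, each covering a new vertex, with at most `q` vertices overall. -/
def seqs (n q : ℕ) : ℕ → Finset (List (Finset (Fin n)))
  | 0 => {[]}
  | k + 1 => ((seqs n q k ×ˢ Finset.powersetCard 3 (Finset.univ : Finset (Fin n))).filter
      (fun x => ¬ x.2 ⊆ vL x.1 ∧ (vL (x.2 :: x.1)).card ≤ q)).image (fun x => x.2 :: x.1)

lemma mem_eT {n : ℕ} (t : Finset (Fin n)) (a b : Fin n) :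
    s(a, b) ∈ eT t ↔ a ∈ t ∧ b ∈ t ∧ a ≠ b := by
  unfold eT
  simp only [Finset.mem_image, Finset.mem_offDiag, Prod.exists, Sym2.eq_iff]
  constructor
  · rintro ⟨x, y, ⟨hx, hy, hxy⟩, ⟨rfl, rfl⟩ | ⟨rfl, rfl⟩⟩
    · exact ⟨hx, hy, hxy⟩
    · exact ⟨hy, hx, hxy.symm⟩
  · rintro ⟨ha, hb, hab⟩
    exact ⟨a, b, ⟨ha, hb, hab⟩, Or.inl ⟨rfl, rfl⟩⟩

lemma card_eT {n : ℕ} (t : Finset (Fin n)) (ht : t.card = 3) : (eT t).card ≤ 3 := by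
  have h := Sym2.card_image_offDiag t
  rw [ht] at h
  have : eT t = t.offDiag.image Sym2.mk.uncurry := rfl
  rw [this, h]
  decide

lemma eL_sub {n : ℕ} (L : List (Finset (Fin n))) (a b : Fin n) (h : s(a, b) ∈ eL L) :
    a ∈ vL L ∧ b ∈ vL L := by
  induction L with
  | nil => simp [eL] at h
  | cons t L ih =>
    simp only [eL, vL, Finset.mem_union, mem_eT] at h ⊢
    rcases h with h | h
    · exact ⟨Or.inl h.1, Or.inl h.2.1⟩
    · exact ⟨Or.inr (ih h).1, Or.inr (ih h).2⟩

lemma seqs_prop {n q : ℕ} (k : ℕ) : ∀ L ∈ seqs n q k,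
    (eL L).card ≤ 3 * k ∧ k ≤ (vL L).card ∧ (vL L).card ≤ q := by
  induction k with
  | zero => intro L hL; simp [seqs] at hL; subst hL; simp [eL, vL]
  | succ k ih =>
    intro L hL
    simp only [seqs, Finset.mem_image, Finset.mem_filter, Finset.mem_product, Prod.exists,
      Finset.mem_powersetCard] at hL
    obtain ⟨L', t, ⟨⟨hL', -, ht⟩, hn, hc⟩, rfl⟩ := hL
    obtain ⟨h1, h2, h3⟩ := ih L' hL'
    refine ⟨?_, ?_, hc⟩
    · have := Finset.card_union_le (eT t) (eL L')
      have := card_eT t ht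
      simp only [eL]; omega
    · have : vL L' ⊂ t ∪ vL L' := by
        rw [Finset.ssubset_iff_subset_ne]
        refine ⟨Finset.subset_union_right, fun h => hn ?_⟩
        rw [h]; exact Finset.subset_union_left
      have := Finset.card_lt_card this
      simp only [vL]; omega

lemma step_sum {n : ℕ} (l p : ℝ) (q : ℕ) (hp0 : 0 ≤ p) (hp1 : p ≤ 1) (hpl : (n : ℝ) * p = l)
    (hqn : q ≤ n) (S : Finset (Fin n)) (E : Finset (Sym2 (Fin n)))
    (hE : E.card ≤ 3 * q) (hES : ∀ a b, s(a, b) ∈ E → a ∈ S ∧ b ∈ S) :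
    ∑ t ∈ (Finset.powersetCard 3 (Finset.univ : Finset (Fin n))).filter (fun t => ¬ t ⊆ S),
      p ^ (eT t \ E).card ≤ 3 * l ^ 2 + l ^ 3 := by
  set T := (Finset.powersetCard 3 (Finset.univ : Finset (Fin n))).filter (fun t => ¬ t ⊆ S)
  have key : ∀ t ∈ T, ∃ x y z : Fin n, t = {x, y, z} ∧ x ≠ y ∧ x ≠ z ∧ y ≠ z ∧ z ∉ S := by
    intro t ht
    simp only [T, Finset.mem_filter, Finset.mem_powersetCard, Finset.not_subset] at ht
    obtain ⟨⟨-, h3⟩, z, hz, hzS⟩ := ht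
    have : (t.erase z).card = 2 := by rw [Finset.card_erase_of_mem hz, h3]
    obtain ⟨x, y, hxy, he⟩ := Finset.card_eq_two.1 this
    have hx : x ∈ t.erase z := by rw [he]; simp
    have hy : y ∈ t.erase z := by rw [he]; simp
    refine ⟨x, y, z, ?_, hxy, (Finset.mem_erase.1 hx).1, (Finset.mem_erase.1 hy).1, hzS⟩
    rw [← Finset.insert_erase hz, he]
    ext a; simp; tauto
  rcases T.eq_empty_or_nonempty with hTe | ⟨t₀, ht₀⟩
  · rw [hTe, Finset.sum_empty]
    have hl : 0 ≤ l := by rw [← hpl]; positivity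
    positivity
  have hne : Nonempty (Fin n) := ⟨(key t₀ ht₀).choose⟩
  choose! x y z h1 h2 h3 h4 h5 using key
  let φ : Finset (Fin n) → Sym2 (Fin n) × Fin n := fun t => (s(x t, y t), z t)
  let g : Sym2 (Fin n) × Fin n → ℝ := fun e => (if e.1 ∈ E then p ^ 2 else 0) + p ^ 3
  have hg0 : ∀ e, 0 ≤ g e := by
    intro e; simp only [g]; split_ifs <;> positivity
  have hinj : Set.InjOn φ T := by
    intro t ht t' ht' h
    simp only [φ, Prod.mk.injEq, Sym2.eq_iff] at h
    rw [h1 t ht, h1 t' ht']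
    rcases h with ⟨⟨a, b⟩ | ⟨a, b⟩, c⟩
    · rw [a, b, c]
    · rw [a, b, c]; ext w; simp; tauto
  have hle : ∀ t ∈ T, p ^ (eT t \ E).card ≤ g (φ t) := by
    intro t ht
    have e1 := h1 t ht
    have e2 := h2 t ht
    have e3 := h3 t ht
    have e4 := h4 t ht
    have e5 := h5 t ht
    generalize hX : x t = X at *
    generalize hY : y t = Y at *
    generalize hZ : z t = Z at *
    have m1 : s(X, Z) ∈ eT t \ E := by
      rw [Finset.mem_sdiff, mem_eT]
      exact ⟨⟨by simp [e1], by simp [e1], e3⟩, fun h => e5 (hES _ _ h).2⟩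
    have m2 : s(Y, Z) ∈ eT t \ E := by
      rw [Finset.mem_sdiff, mem_eT]
      exact ⟨⟨by simp [e1], by simp [e1], e4⟩, fun h => e5 (hES _ _ h).2⟩
    have ne1 : s(X, Z) ≠ s(Y, Z) := by
      simp only [ne_eq, Sym2.eq_iff]; tauto
    simp only [g, φ, hX, hY]
    split_ifs with hXY
    · have : 2 ≤ (eT t \ E).card := by
        rw [← Finset.card_pair ne1]
        apply Finset.card_le_card
        intro a ha
        simp only [Finset.mem_insert, Finset.mem_singleton] at ha
        rcases ha with rfl | rfl <;> assumption
      have := pow_le_pow_of_le_one hp0 hp1 this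
      have : 0 ≤ p ^ 3 := by positivity
      linarith
    · have m3 : s(X, Y) ∈ eT t \ E := by
        rw [Finset.mem_sdiff, mem_eT]
        exact ⟨⟨by simp [e1], by simp [e1], e2⟩, hXY⟩
      have ne2 : s(X, Y) ≠ s(X, Z) := by
        simp only [ne_eq, Sym2.eq_iff]; tauto
      have ne3 : s(X, Y) ≠ s(Y, Z) := by
        simp only [ne_eq, Sym2.eq_iff]; tauto
      have : 3 ≤ (eT t \ E).card := by
        have h3 : ({s(X, Y), s(X, Z), s(Y, Z)} : Finset (Sym2 (Fin n))).card = 3 :=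
          Finset.card_eq_three.2 ⟨_, _, _, ne2, ne3, ne1, rfl⟩
        rw [← h3]
        apply Finset.card_le_card
        intro a ha
        simp only [Finset.mem_insert, Finset.mem_singleton] at ha
        rcases ha with rfl | rfl | rfl <;> assumption
      have := pow_le_pow_of_le_one hp0 hp1 this
      linarith
  calc ∑ t ∈ T, p ^ (eT t \ E).card ≤ ∑ t ∈ T, g (φ t) := Finset.sum_le_sum hle
    _ = ∑ e ∈ T.image φ, g e := (Finset.sum_image hinj).symm
    _ ≤ ∑ e, g e := Finset.sum_le_sum_of_subset_of_nonneg (Finset.subset_univ _)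
        (fun e _ _ => hg0 e)
    _ = n * (E.card * p ^ 2) + (Fintype.card (Sym2 (Fin n)) * n) * p ^ 3 := by
        simp only [g, Finset.sum_add_distrib, Fintype.sum_prod_type_right]
        simp
        ring
    _ ≤ n * ((3 * n) * p ^ 2) + ((n : ℝ) ^ 2 * n) * p ^ 3 := by
        have hE' : (E.card : ℝ) ≤ 3 * n := by
          have : E.card ≤ 3 * n := by omega
          exact_mod_cast this
        have hc : (Fintype.card (Sym2 (Fin n)) : ℝ) ≤ (n : ℝ) ^ 2 := by
          have : Fintype.card (Sym2 (Fin n)) ≤ n ^ 2 := by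
            have := Fintype.card_le_of_surjective
              (fun x : Fin n × Fin n => s(x.1, x.2)) (by
                intro e; induction e with | _ a b => exact ⟨(a, b), rfl⟩)
            simpa [sq] using this
          exact_mod_cast this
        gcongr
    _ = 3 * l ^ 2 + l ^ 3 := by rw [← hpl]; ring

lemma seqs_sum {n : ℕ} (l p : ℝ) (q : ℕ) (hp0 : 0 ≤ p) (hp1 : p ≤ 1) (hpl : (n : ℝ) * p = l)
    (hqn : q ≤ n) (k : ℕ) :
    ∑ L ∈ seqs n q k, p ^ (eL L).card ≤ (3 * l ^ 2 + l ^ 3) ^ k := by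
  have hl : 0 ≤ l := by rw [← hpl]; positivity
  induction k with
  | zero => simp [seqs, eL]
  | succ k ih =>
    simp only [seqs]
    rw [Finset.sum_image (by rintro ⟨a, b⟩ _ ⟨c, d⟩ _ h; simp at h; simp [h])]
    calc _ ≤ ∑ x ∈ (seqs n q k ×ˢ Finset.powersetCard 3 (Finset.univ : Finset (Fin n))).filter
          (fun x => ¬ x.2 ⊆ vL x.1), p ^ (eL (x.2 :: x.1)).card := by
          apply Finset.sum_le_sum_of_subset_of_nonneg
          · intro x hx
            simp only [Finset.mem_filter] at hx ⊢
            exact ⟨hx.1, hx.2.1⟩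
          · intros; positivity
      _ = ∑ L ∈ seqs n q k, ∑ t ∈ (Finset.powersetCard 3 (Finset.univ : Finset (Fin n))).filter
          (fun t => ¬ t ⊆ vL L), p ^ (eL L).card * p ^ (eT t \ eL L).card := by
          rw [Finset.sum_filter, Finset.sum_product]
          refine Finset.sum_congr rfl fun L _ => ?_
          rw [Finset.sum_filter]
          refine Finset.sum_congr rfl fun t _ => ?_
          split_ifs
          · rfl
          · rw [← pow_add]
            congr 1
            simp only [eL]
            rw [← Finset.card_sdiff_add_card]
            ring
      _ ≤ ∑ L ∈ seqs n q k, p ^ (eL L).card * (3 * l ^ 2 + l ^ 3) := by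
          refine Finset.sum_le_sum fun L hL => ?_
          rw [← Finset.mul_sum]
          obtain ⟨a, b, c⟩ := seqs_prop k L hL
          refine mul_le_mul_of_nonneg_left ?_ (by positivity)
          exact step_sum l p q hp0 hp1 hpl hqn _ _ (by omega) (eL_sub L)
      _ ≤ _ := by
          rw [← Finset.sum_mul, pow_succ]
          exact mul_le_mul_of_nonneg_right ih (by positivity)

/-- Probability of containing a prescribed set of edges. -/
lemma contain_prob {n : ℕ} (p : ℝ) (hp0 : 0 ≤ p) (hp1 : p ≤ 1) (E : Finset (Sym2 (Fin n))) :
    ∑ H : SimpleGraph (Fin n), (if (E : Set (Sym2 (Fin n))) ⊆ H.edgeSet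
      then graphProb n p H else 0) ≤ p ^ E.card := by
  rw [← Finset.sum_filter]
  let D : SimpleGraph (Fin n) → Finset (Sym2 (Fin n)) :=
    fun H => Finset.univ.filter (fun e => e ∈ H.edgeSet)
  let U : Finset (Sym2 (Fin n)) := Finset.univ.filter (fun e => ¬ e.IsDiag)
  have hU : U.card = n.choose 2 := by
    have := Sym2.card_subtype_not_diag (α := Fin n)
    rw [Fintype.card_subtype, Fintype.card_fin] at this
    convert this
  have hDU : ∀ H, D H ⊆ U := by
    intro H e he
    simp only [D, U, Finset.mem_filter, Finset.mem_univ, true_and] at he ⊢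
    exact H.not_isDiag_of_mem_edgeSet he
  set T := (Finset.univ : Finset (SimpleGraph (Fin n))).filter
    (fun H => (E : Set (Sym2 (Fin n))) ⊆ H.edgeSet) with hT
  have hED : ∀ H ∈ T, E ⊆ D H := by
    intro H hH e he
    simp only [hT, D, Finset.mem_filter, Finset.mem_univ, true_and] at hH ⊢
    exact hH he
  have hDinj : ∀ H H', D H = D H' → H = H' := by
    intro H H' h
    apply SimpleGraph.edgeSet_injective
    ext e
    have : e ∈ D H ↔ e ∈ D H' := by rw [h]
    simpa [D] using this
  have hinj : Set.InjOn (fun H => D H \ E) T := by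
    intro H hH H' hH' h
    apply hDinj
    simp only at h
    rw [← Finset.sdiff_union_of_subset (hED H hH), ← Finset.sdiff_union_of_subset (hED H' hH'), h]
  have hval : ∀ H ∈ T, graphProb n p H =
      p ^ E.card * (p ^ (D H \ E).card * (1 - p) ^ ((U \ E).card - (D H \ E).card)) := by
    intro H hH
    have a1 := Finset.card_sdiff_add_card_eq_card (hED H hH)
    have a2 := Finset.card_sdiff_add_card_eq_card ((hED H hH).trans (hDU H))
    have : edgeCount H = (D H).card := rfl
    unfold graphProb
    rw [this, ← mul_assoc, ← pow_add, ← hU]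
    congr 2 <;> omega
  rw [Finset.sum_congr rfl hval, ← Finset.mul_sum]
  have hs := Finset.sum_pow_mul_eq_add_pow p (1 - p) (U \ E)
  rw [add_sub_cancel, one_pow] at hs
  have h1p : 0 ≤ 1 - p := by linarith
  have : ∑ H ∈ T, p ^ (D H \ E).card * (1 - p) ^ ((U \ E).card - (D H \ E).card) ≤ 1 := by
    refine le_trans ?_ hs.le
    rw [← Finset.sum_image (g := fun H => D H \ E)
      (f := fun s => p ^ s.card * (1 - p) ^ ((U \ E).card - s.card)) hinj]
    apply Finset.sum_le_sum_of_subset_of_nonneg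
    · intro s hs
      obtain ⟨H, hH, rfl⟩ := Finset.mem_image.1 hs
      rw [Finset.mem_powerset]
      exact Finset.sdiff_subset_sdiff (hDU H) le_rfl
    · intros; positivity
  calc _ ≤ p ^ E.card * 1 := mul_le_mul_of_nonneg_left this (by positivity)
    _ = _ := mul_one _

lemma list_mem_seqs {n q : ℕ} (F : Finset (Finset (Fin n))) (A : Finset (Fin n))
    (hA : A.card = q) (hFA : ∀ t ∈ F, t ⊆ A) (hF3 : ∀ t ∈ F, t.card = 3)
    (hpriv : ∀ t ∈ F, ∃ v ∈ t, ∀ t' ∈ F, v ∈ t' → t' = t) (L : List (Finset (Fin n)))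
    (hL : ∀ t ∈ L, t ∈ F) (hnd : L.Nodup) : L ∈ seqs n q L.length := by
  have hv : ∀ (L : List (Finset (Fin n))) v, v ∈ vL L ↔ ∃ t ∈ L, v ∈ t := by
    intro L v
    induction L with
    | nil => simp [vL]
    | cons t L ih => simp [vL, ih]
  induction L with
  | nil => simp [seqs]
  | cons t L ih =>
    rw [List.nodup_cons] at hnd
    have ih' := ih (fun t ht => hL t (List.mem_cons_of_mem _ ht)) hnd.2
    simp only [List.length_cons, seqs, Finset.mem_image, Finset.mem_filter, Finset.mem_product,
      Prod.exists, Finset.mem_powersetCard]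
    have htF := hL t List.mem_cons_self
    refine ⟨L, t, ⟨⟨ih', Finset.subset_univ _, hF3 t htF⟩, ?_, ?_⟩, rfl⟩
    · intro hs
      obtain ⟨v, hvt, hv'⟩ := hpriv t htF
      obtain ⟨t', ht', hvt'⟩ := (hv L v).1 (hs hvt)
      have := hv' t' (hL t' (List.mem_cons_of_mem _ ht')) hvt'
      exact hnd.1 (this ▸ ht')
    · rw [← hA]
      apply Finset.card_le_card
      intro v hvv
      obtain ⟨t', ht', hvt'⟩ := (hv _ v).1 hvv
      exact hFA t' (hL t' ht') hvt'

lemma exists_family {n q : ℕ} (G : SimpleGraph (Fin n)) (hq : vT G = q) :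
    ∃ k, k ≤ q ∧ q ≤ 3 * k ∧
      k.factorial ≤ ((seqs n q k).filter
        (fun L => (eL L : Set (Sym2 (Fin n))) ⊆ G.edgeSet)).card := by
  set A : Finset (Fin n) :=
    Finset.univ.filter (fun v => ∃ u w, G.Adj v u ∧ G.Adj v w ∧ G.Adj u w) with hAdef
  have hA : A.card = q := by
    rw [← hq, hAdef]; unfold vT; congr!
  let T : Finset (Finset (Fin n)) := Finset.univ.filter (fun s => G.IsNClique 3 s)
  let Fs := T.powerset.filter (fun F => ∀ v ∈ A, ∃ t ∈ F, v ∈ t)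
  have hT : T ∈ Fs := by
    simp only [Fs, Finset.mem_filter, Finset.mem_powerset, subset_refl, true_and]
    intro v hv
    simp only [hAdef, Finset.mem_filter, Finset.mem_univ, true_and] at hv
    obtain ⟨u, w, h1, h2, h3⟩ := hv
    refine ⟨{v, u, w}, ?_, by simp⟩
    simp only [T, Finset.mem_filter, Finset.mem_univ, true_and]
    exact SimpleGraph.is3Clique_triple_iff.2 ⟨h1, h2, h3⟩
  obtain ⟨F, hF, hmin⟩ := Finset.exists_min_image Fs Finset.card ⟨T, hT⟩
  simp only [Fs, Finset.mem_filter, Finset.mem_powerset] at hF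
  obtain ⟨hFT, hcov⟩ := hF
  have hcl : ∀ t ∈ F, G.IsNClique 3 t := by
    intro t ht
    have := hFT ht
    simpa [T] using this
  have hF3 : ∀ t ∈ F, t.card = 3 := fun t ht => (hcl t ht).card_eq
  have hFA : ∀ t ∈ F, t ⊆ A := by
    intro t ht v hv
    simp only [hAdef, Finset.mem_filter, Finset.mem_univ, true_and]
    have hc := hcl t ht
    have : (t.erase v).card = 2 := by rw [Finset.card_erase_of_mem hv, hF3 t ht]
    obtain ⟨x, y, hxy, he⟩ := Finset.card_eq_two.1 this
    have hx : x ∈ t.erase v := by rw [he]; simp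
    have hy : y ∈ t.erase v := by rw [he]; simp
    rw [Finset.mem_erase] at hx hy
    exact ⟨x, y, hc.1 hv hx.2 (Ne.symm hx.1), hc.1 hv hy.2 (Ne.symm hy.1), hc.1 hx.2 hy.2 hxy⟩
  have hpriv : ∀ t ∈ F, ∃ v ∈ t, ∀ t' ∈ F, v ∈ t' → t' = t := by
    intro t ht
    by_contra hcon
    push Not at hcon
    have : F.erase t ∈ Fs := by
      simp only [Fs, Finset.mem_filter, Finset.mem_powerset]
      refine ⟨(Finset.erase_subset _ _).trans hFT, fun v hv => ?_⟩
      obtain ⟨t', ht', hvt'⟩ := hcov v hv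
      by_cases h : t' = t
      · subst h
        obtain ⟨t'', a, b, c⟩ := hcon v hvt'
        exact ⟨t'', Finset.mem_erase.2 ⟨c, a⟩, b⟩
      · exact ⟨t', Finset.mem_erase.2 ⟨h, ht'⟩, hvt'⟩
    have h1 := hmin _ this
    have h2 := Finset.card_erase_lt_of_mem ht
    omega
  have hmem : ∀ L : List (Finset (Fin n)), L.Perm F.toList → L ∈ seqs n q F.card := by
    intro L hL
    have := list_mem_seqs F A hA hFA hF3 hpriv L
      (fun t ht => Finset.mem_toList.1 (hL.mem_iff.1 ht)) (hL.nodup_iff.2 F.nodup_toList)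
    rwa [hL.length_eq, Finset.length_toList] at this
  refine ⟨F.card, ?_, ?_, ?_⟩
  · obtain ⟨_, a, b⟩ := seqs_prop F.card _ (hmem _ (List.Perm.refl _))
    omega
  · rw [← hA]
    have : A ⊆ F.biUnion id := by
      intro v hv
      obtain ⟨t, ht, hvt⟩ := hcov v hv
      exact Finset.mem_biUnion.2 ⟨t, ht, hvt⟩
    calc A.card ≤ (F.biUnion id).card := Finset.card_le_card this
      _ ≤ F.card * 3 := Finset.card_biUnion_le_card_mul _ _ _ (fun t ht => (hF3 t ht).le)
      _ = _ := mul_comm _ _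
  · have hlen := List.length_permutations F.toList
    rw [Finset.length_toList] at hlen
    rw [← hlen, ← List.toFinset_card_of_nodup (List.nodup_permutations _ F.nodup_toList)]
    apply Finset.card_le_card
    intro L hL
    rw [List.mem_toFinset, List.mem_permutations] at hL
    rw [Finset.mem_filter]
    refine ⟨hmem L hL, ?_⟩
    have hsub : ∀ t ∈ L, t ∈ F := fun t ht => Finset.mem_toList.1 (hL.mem_iff.1 ht)
    clear hL
    induction L with
    | nil => simp [eL]
    | cons t L ih =>
      intro e he
      simp only [eL, Finset.coe_union, Set.mem_union, Finset.mem_coe] at he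
      rcases he with he | he
      · induction e with | _ a b =>
        rw [mem_eT] at he
        exact (hcl t (hsub t List.mem_cons_self)).1 he.1 he.2.1 he.2.2
      · exact ih (fun t ht => hsub t (List.mem_cons_of_mem _ ht)) he

lemma prob_bound {n : ℕ} (l p : ℝ) (q : ℕ) (hp0 : 0 ≤ p) (hp1 : p ≤ 1) (hpl : (n : ℝ) * p = l)
    (hqn : q ≤ n) (A : Set (SimpleGraph (Fin n)))
    (hA : ∀ H ∈ A, ∃ G' : SimpleGraph (Fin n), G' ≤ H ∧ qBasic q G') :
    prob n p A ≤
      ∑ k ∈ (Finset.range (q + 1)).filter (fun k => q ≤ 3 * k),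
        (3 * l ^ 2 + l ^ 3) ^ k / (k.factorial : ℝ) := by
  have h1p : 0 ≤ 1 - p := by linarith
  have hgp : ∀ H, 0 ≤ graphProb n p H := by intro H; unfold graphProb; positivity
  set K := (Finset.range (q + 1)).filter (fun k => q ≤ 3 * k) with hK
  have hpt : ∀ H : SimpleGraph (Fin n),
      (if H ∈ A then graphProb n p H else 0) ≤
      ∑ k ∈ K, (∑ L ∈ seqs n q k, (if (eL L : Set (Sym2 (Fin n))) ⊆ H.edgeSet
      then graphProb n p H else 0)) / (k.factorial : ℝ) := by
    intro H
    have hnn : ∀ k ∈ K, 0 ≤ (∑ L ∈ seqs n q k, (if (eL L : Set (Sym2 (Fin n))) ⊆ H.edgeSet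
      then graphProb n p H else 0)) / (k.factorial : ℝ) := by
      intro k _
      apply div_nonneg _ (by positivity)
      apply Finset.sum_nonneg
      intro L _
      split_ifs
      · exact hgp H
      · exact le_rfl
    split_ifs with hH
    · obtain ⟨G', hle, hq, -⟩ := hA H hH
      obtain ⟨k, hk1, hk2, hk3⟩ := exists_family G' hq
      have hkK : k ∈ K := by simp [hK]; omega
      refine le_trans ?_ (Finset.single_le_sum hnn hkK)
      rw [le_div_iff₀ (by positivity), ← Finset.sum_filter, Finset.sum_const, nsmul_eq_mul,
        mul_comm]
      refine mul_le_mul_of_nonneg_right ?_ (hgp H)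
      have : k.factorial ≤ ((seqs n q k).filter
        (fun L => (eL L : Set (Sym2 (Fin n))) ⊆ H.edgeSet)).card := by
        refine hk3.trans (Finset.card_le_card ?_)
        intro L hL
        rw [Finset.mem_filter] at hL ⊢
        exact ⟨hL.1, hL.2.trans (SimpleGraph.edgeSet_mono hle)⟩
      exact_mod_cast this
    · exact Finset.sum_nonneg hnn
  unfold prob
  refine (Finset.sum_le_sum fun H _ => hpt H).trans ?_
  rw [Finset.sum_comm]
  refine Finset.sum_le_sum fun k _ => ?_
  rw [← Finset.sum_div]
  refine div_le_div_of_nonneg_right ?_ (by positivity)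
  rw [Finset.sum_comm]
  exact (Finset.sum_le_sum fun L _ => contain_prob p hp0 hp1 (eL L)).trans
    (seqs_sum l p q hp0 hp1 hpl hqn k)

lemma term_bound_s18 (M : ℝ) (q k : ℕ) (hM : 1 ≤ M) (hq : 3 ≤ q) (hkq : k ≤ q) (hk : q ≤ 3 * k) :
    M ^ k / (k.factorial : ℝ) ≤
      Real.exp (-((q : ℝ) / 3) * Real.log ((q : ℝ) / 3) + (1 + Real.log M) * q) := by
  have hk1 : (1 : ℝ) ≤ (q : ℝ) / 3 := by
    have : (3 : ℝ) ≤ q := by exact_mod_cast hq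
    linarith
  have hk2 : (q : ℝ) / 3 ≤ k := by
    have : (q : ℝ) ≤ 3 * k := by exact_mod_cast hk
    linarith
  have hk3 : (k : ℝ) ≤ q := by exact_mod_cast hkq
  have hkpos : (0 : ℝ) < k := by linarith
  have h1 : (k : ℝ) ^ k / (k.factorial : ℝ) ≤ Real.exp k :=
    Real.pow_div_factorial_le_exp _ hkpos.le k
  have hlog : 0 ≤ Real.log ((q : ℝ) / 3) := Real.log_nonneg hk1
  have hlogM : 0 ≤ Real.log M := Real.log_nonneg hM
  have hlogk : Real.log ((q : ℝ) / 3) ≤ Real.log k := Real.log_le_log (by linarith) hk2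
  have h2 : (1 : ℝ) / (k.factorial : ℝ) ≤ Real.exp (k - k * Real.log k) := by
    rw [Real.exp_sub, mul_comm (k : ℝ), Real.exp_mul, Real.exp_log hkpos, Real.rpow_natCast,
      le_div_iff₀ (by positivity)]
    calc _ = (k : ℝ) ^ k / (k.factorial : ℝ) := by ring
      _ ≤ _ := h1
  have h3 : M ^ k = Real.exp (k * Real.log M) := by
    rw [mul_comm, Real.exp_mul, Real.exp_log (by linarith), Real.rpow_natCast]
  calc M ^ k / (k.factorial : ℝ) = M ^ k * (1 / (k.factorial : ℝ)) := by ring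
    _ ≤ Real.exp (k * Real.log M) * Real.exp (k - k * Real.log k) := by
      rw [h3]; exact mul_le_mul_of_nonneg_left h2 (Real.exp_pos _).le
    _ = Real.exp (k * Real.log M + (k - k * Real.log k)) := (Real.exp_add _ _).symm
    _ ≤ _ := by
      apply Real.exp_le_exp.2
      have a1 : (k : ℝ) * Real.log M ≤ q * Real.log M := mul_le_mul_of_nonneg_right hk3 hlogM
      have a2 : (q : ℝ) / 3 * Real.log ((q : ℝ) / 3) ≤ k * Real.log k :=
        mul_le_mul hk2 hlogk hlog hkpos.le
      nlinarith

/-- **Upper bound on the probability to contain a `q`-basic subgraph.** -/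
theorem qBasic_containment_prob (l : ℝ) (hl : 0 < l) :
    ∃ C : ℝ, 0 < C ∧ ∃ q₀ : ℕ, ∀ q ≥ q₀, ∀ n : ℕ, l < n →
      prob n (l / n) {H | ∃ G' : SimpleGraph (Fin n), G' ≤ H ∧ qBasic q G'} ≤
        Real.exp (-((q : ℝ) / 3) * Real.log ((q : ℝ) / 3) + C * q) := by
  set M : ℝ := 1 + (3 * l ^ 2 + l ^ 3) with hM
  have hM1 : 1 ≤ M := by
    have : 0 ≤ 3 * l ^ 2 + l ^ 3 := by positivity
    linarith
  have hlogM : 0 ≤ Real.log M := Real.log_nonneg hM1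
  refine ⟨2 + Real.log M, by linarith, 3, fun q hq n hn => ?_⟩
  have hn0 : (0 : ℝ) < n := hl.trans hn
  by_cases hqn : q ≤ n
  · refine (prob_bound l (l / n) q (by positivity) ((div_le_one hn0).2 hn.le)
      (by field_simp) hqn _ (fun H hH => hH)).trans ?_
    set B := Real.exp (-((q : ℝ) / 3) * Real.log ((q : ℝ) / 3) + (1 + Real.log M) * q)
    have hterm : ∀ k ∈ (Finset.range (q + 1)).filter (fun k => q ≤ 3 * k),
        (3 * l ^ 2 + l ^ 3) ^ k / (k.factorial : ℝ) ≤ B := by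
      intro k hk
      simp only [Finset.mem_filter, Finset.mem_range] at hk
      refine le_trans ?_ (term_bound_s18 M q k hM1 hq (by omega) hk.2)
      gcongr
      linarith
    refine (Finset.sum_le_card_nsmul _ _ _ hterm).trans ?_
    have hc : (((Finset.range (q + 1)).filter (fun k => q ≤ 3 * k)).card : ℝ) ≤ Real.exp q := by
      have h1 : ((Finset.range (q + 1)).filter (fun k => q ≤ 3 * k)).card ≤ q + 1 := by
        simpa using Finset.card_filter_le (Finset.range (q + 1)) (fun k => q ≤ 3 * k)
      have h2 : (((Finset.range (q + 1)).filter (fun k => q ≤ 3 * k)).card : ℝ) ≤ q + 1 := by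
        exact_mod_cast h1
      exact h2.trans (Real.add_one_le_exp _)
    rw [nsmul_eq_mul]
    calc _ ≤ Real.exp q * B := mul_le_mul_of_nonneg_right hc (Real.exp_pos _).le
      _ = _ := by rw [← Real.exp_add]; congr 1; ring
  · have : prob n (l / n) {H | ∃ G' : SimpleGraph (Fin n), G' ≤ H ∧ qBasic q G'} = 0 := by
      unfold prob
      apply Finset.sum_eq_zero
      intro H _
      rw [if_neg]
      rintro ⟨G', -, hq', -⟩
      apply hqn
      rw [← hq']
      simpa [vT] using Finset.card_le_univ (Finset.univ.filter
        (fun v : Fin n => ∃ u w : Fin n, G'.Adj v u ∧ G'.Adj v w ∧ G'.Adj u w))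
    rw [this]
    exact (Real.exp_pos _).le
end
end

section
/- Fix λ > 0, set p_n = λ/n, and fix β ≥ 0. Define Z_n(β log n) := E[ exp( β (log n) · V_T(G_{n,p_n}) ) ], and let P_{β log n} be the probability measure on graphs on [n] whose density with respect to the law P of G_{n,p_n} is exp(β (log n) V_T)/Z_n(β log n). Then: (i) lim_{n→∞} (1/(n log n)) · log Z_n(β log n) = max(β − 1/3, 0); (ii) if β < 1/3, then for every ε > 0, lim_{n→∞} P_{β log n}( V_T/n ≥ ε ) = 0; (iii) if β > 1/3, then for every ε > 0, lim_{n→∞} P_{β log n}( V_T/n < 1 − ε ) = 0. -/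
open scoped BigOperators Classical
open Finset Filter

noncomputable section

/-! ### Graphs as edge sets -/

/-- Non-diagonal pairs. -/
def dd (n : ℕ) : Finset (Sym2 (Fin n)) := Finset.univ.filter (fun e => ¬ e.IsDiag)

lemma card_dd (n : ℕ) : (dd n).card = n.choose 2 := by
  have := Sym2.card_subtype_not_diag (α := Fin n)
  rw [Fintype.card_subtype, Fintype.card_fin] at this
  unfold dd
  convert this

/-- Edge finset of a graph. -/
def ef {n : ℕ} (G : SimpleGraph (Fin n)) : Finset (Sym2 (Fin n)) :=
  Finset.univ.filter (fun e => e ∈ G.edgeSet)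

lemma sum_graph {n : ℕ} (φ : Finset (Sym2 (Fin n)) → ℝ) :
    ∑ G : SimpleGraph (Fin n), φ (ef G) = ∑ S ∈ (dd n).powerset, φ S := by
  refine Finset.sum_bij' (fun G _ => ef G) (fun S _ => SimpleGraph.fromEdgeSet (S : Set (Sym2 (Fin n))))
    ?_ ?_ ?_ ?_ ?_
  · intro G _
    rw [Finset.mem_powerset]
    intro e he
    simp only [ef, dd, Finset.mem_filter, Finset.mem_univ, true_and] at he ⊢
    exact G.not_isDiag_of_mem_edgeSet he
  · intro S _
    exact Finset.mem_univ _
  · intro G _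
    simp [ef]
  · intro S hS
    rw [Finset.mem_powerset] at hS
    ext e
    simp only [ef, SimpleGraph.edgeSet_fromEdgeSet, Finset.mem_filter, Finset.mem_univ, true_and]
    constructor
    · intro h
      exact h.1
    · intro h
      have := hS h
      simp only [dd, Finset.mem_filter, Finset.mem_univ, true_and] at this
      exact ⟨h, this⟩
  · intro G _
    rfl

lemma prob_sup {n : ℕ} {p : ℝ} (hp : 0 ≤ p) (F : Finset (Sym2 (Fin n))) :
    ∑ G : SimpleGraph (Fin n), (if F ⊆ ef G then graphProb n p G else 0) ≤ p ^ F.card := by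
  have h := sum_graph (n := n) (fun S => if F ⊆ S then p ^ S.card * (1 - p) ^ (n.choose 2 - S.card) else 0)
  have h' : ∑ G : SimpleGraph (Fin n), (if F ⊆ ef G then graphProb n p G else 0)
    = ∑ S ∈ (dd n).powerset, if F ⊆ S then p ^ S.card * (1 - p) ^ (n.choose 2 - S.card) else 0 := by
    rw [← h]; rfl
  rw [h', ← Finset.sum_filter]
  by_cases hF : F ⊆ dd n
  · apply le_of_eq
    have key : ∑ S ∈ (dd n).powerset with F ⊆ S, p ^ S.card * (1 - p) ^ (n.choose 2 - S.card)
      = ∑ T ∈ (dd n \ F).powerset, p ^ F.card * (p ^ T.card * (1 - p) ^ ((dd n \ F).card - T.card)) := by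
      refine Finset.sum_bij' (fun S _ => S \ F) (fun T _ => T ∪ F) ?_ ?_ ?_ ?_ ?_
      · intro S hS
        simp only [Finset.mem_filter, Finset.mem_powerset] at hS ⊢
        exact Finset.sdiff_subset_sdiff hS.1 (le_refl _)
      · intro T hT
        simp only [Finset.mem_filter, Finset.mem_powerset] at hT ⊢
        exact ⟨Finset.union_subset (hT.trans Finset.sdiff_subset) hF, Finset.subset_union_right⟩
      · intro S hS
        simp only [Finset.mem_filter, Finset.mem_powerset] at hS
        exact Finset.sdiff_union_of_subset hS.2
      · intro T hT
        simp only [Finset.mem_powerset] at hT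
        apply Finset.union_sdiff_cancel_right
        exact (Finset.subset_sdiff.1 hT).2
      · intro S hS
        simp only [Finset.mem_filter, Finset.mem_powerset] at hS
        have h1 := Finset.card_sdiff_of_subset hS.2
        have h2 := Finset.card_sdiff_of_subset hF
        have h3 := Finset.card_le_card hS.2
        have h4 := Finset.card_le_card hS.1
        rw [card_dd] at h2 h4
        rw [← mul_assoc, ← pow_add]
        congr 2
        · omega
        · omega
    rw [key, ← Finset.mul_sum, Finset.sum_pow_mul_eq_add_pow]
    simp
  · rw [Finset.filter_eq_empty_iff.2]
    · simp; positivity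
    · intro S hS hFS
      exact hF (hFS.trans (Finset.mem_powerset.1 hS))

lemma prob_total (n : ℕ) (p : ℝ) :
    ∑ G : SimpleGraph (Fin n), graphProb n p G = 1 := by
  have h := sum_graph (n := n) (fun S => p ^ S.card * (1 - p) ^ (n.choose 2 - S.card))
  have h' : ∑ G : SimpleGraph (Fin n), graphProb n p G
    = ∑ S ∈ (dd n).powerset, p ^ S.card * (1 - p) ^ (n.choose 2 - S.card) := by
    rw [← h]; rfl
  rw [h', ← card_dd, Finset.sum_pow_mul_eq_add_pow]
  simp

lemma graphProb_nonneg {n : ℕ} {p : ℝ} (hp : 0 ≤ p) (hp1 : p ≤ 1) (G : SimpleGraph (Fin n)) :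
    0 ≤ graphProb n p G := by
  unfold graphProb
  have : 0 ≤ 1 - p := by linarith
  positivity

/-! ### Codes -/

/-- Code type: none, a triangle, or an edge of a triangle owned by another vertex. -/
abbrev Cd (n : ℕ) := Option ((Fin n × Fin n) ⊕ (Fin n × Fin 3))

/-- Edge endpoints of a triangle. -/
def ep {n : ℕ} (v : Fin n) (yz : Fin n × Fin n) (i : Fin 3) : Fin n × Fin n :=
  if i = 0 then (v, yz.1) else if i = 1 then (v, yz.2) else (yz.1, yz.2)

/-- Edges of the triangle. -/
def te {n : ℕ} (v : Fin n) (yz : Fin n × Fin n) : Finset (Sym2 (Fin n)) :=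
  {s(v, yz.1), s(v, yz.2), s(yz.1, yz.2)}

/-- The two edges from `v` to the endpoints of `e`. -/
def we {n : ℕ} (v : Fin n) (e : Fin n × Fin n) : Finset (Sym2 (Fin n)) :=
  {s(v, e.1), s(v, e.2)}

/-- Edges at a vertex from the code. -/
def ce {n : ℕ} (c : Fin n → Cd n) (v : Fin n) : Finset (Sym2 (Fin n)) :=
  match c v with
  | none => ∅
  | some (Sum.inl yz) => te v yz
  | some (Sum.inr (w, i)) =>
    match c w with
    | some (Sum.inl yz) => we v (ep w yz i)
    | _ => ∅

/-- Cost. -/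
def cost {n : ℕ} : Cd n → ℕ
  | none => 0
  | some (Sum.inl _) => 3
  | some (Sum.inr _) => 2

/-- Nontriviality indicator. -/
def ind {n : ℕ} : Cd n → ℕ
  | none => 0
  | some _ => 1

/-- All edges of a code. -/
def ae {n : ℕ} (c : Fin n → Cd n) : Finset (Sym2 (Fin n)) := Finset.univ.biUnion (ce c)

lemma mem_ep {n : ℕ} {v : Fin n} {yz : Fin n × Fin n} {e : Sym2 (Fin n)} (h : e ∈ te v yz) :
    ∃ i, s((ep v yz i).1, (ep v yz i).2) = e := by
  simp only [te, Finset.mem_insert, Finset.mem_singleton] at h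
  rcases h with rfl | rfl | rfl
  · exact ⟨0, by simp [ep]⟩
  · exact ⟨1, by simp [ep]⟩
  · exact ⟨2, by simp [ep]⟩

lemma te_card {n : ℕ} {G : SimpleGraph (Fin n)} {v y z : Fin n} (h1 : G.Adj v y) (h2 : G.Adj v z)
    (h3 : G.Adj y z) : (te v (y, z)).card = 3 := by
  have a := h1.ne
  have b := h2.ne
  have d := h3.ne
  unfold te
  rw [Finset.card_eq_three]
  refine ⟨_, _, _, ?_, ?_, ?_, rfl⟩ <;> simp <;> grind

lemma exists_code_s19 {n : ℕ} (G : SimpleGraph (Fin n)) :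
    ∃ c : Fin n → Cd n, ae c ⊆ ef G ∧ (ae c).card = ∑ v, cost (c v) ∧
      vT G ≤ 3 * ∑ v, ind (c v) := by
  let Q : Finset (Fin n) × (Fin n → Fin n × Fin n) → Prop := fun q =>
    (∀ x ∈ q.1, G.Adj x (q.2 x).1 ∧ G.Adj x (q.2 x).2 ∧ G.Adj (q.2 x).1 (q.2 x).2) ∧
    (∀ x ∈ q.1, ∀ x' ∈ q.1, x ≠ x' → Disjoint (te x (q.2 x)) (te x' (q.2 x')))
  by_cases hn : IsEmpty (Fin n)
  · refine ⟨fun v => none, ?_, ?_, ?_⟩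
    · simp [ae]
    · simp [ae]
    · simp [vT]
  rw [not_isEmpty_iff] at hn
  obtain ⟨v0⟩ := hn
  have hne : (Finset.univ.filter Q).Nonempty := by
    refine ⟨(∅, fun _ => (v0, v0)), ?_⟩
    simp [Q]
  obtain ⟨⟨A, f⟩, hQ, hmax⟩ := Finset.exists_max_image (Finset.univ.filter Q) (fun q => q.1.card) hne
  simp only [Finset.mem_filter, Finset.mem_univ, true_and] at hQ hmax
  obtain ⟨hT, hD⟩ := hQ
  simp only at hT hD hmax
  let U : Finset (Fin n) := A.biUnion (fun x => {x, (f x).1, (f x).2})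
  have hU : U.card ≤ 3 * A.card := by
    rw [mul_comm]
    exact Finset.card_biUnion_le_card_mul _ _ _ (fun x _ => Finset.card_le_three)
  have hAU : ∀ x ∈ A, x ∈ U := fun x hx => Finset.mem_biUnion.2 ⟨x, hx, by simp⟩
  let VT : Finset (Fin n) :=
    Finset.univ.filter (fun v => ∃ u w : Fin n, G.Adj v u ∧ G.Adj v w ∧ G.Adj u w)
  have hteU : ∀ w ∈ A, ∀ e ∈ te w (f w), ∀ x ∈ e, x ∈ U := by
    intro w hw e he x hx
    refine Finset.mem_biUnion.2 ⟨w, hw, ?_⟩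
    simp only [te, Finset.mem_insert, Finset.mem_singleton] at he ⊢
    rcases he with rfl | rfl | rfl <;> (simp only [Sym2.mem_iff] at hx; tauto)
  have hC : ∀ x ∈ VT \ U, ∃ w i, w ∈ A ∧ G.Adj x (ep w (f w) i).1 ∧ G.Adj x (ep w (f w) i).2
      ∧ (ep w (f w) i).1 ≠ (ep w (f w) i).2 ∧ (ep w (f w) i).1 ∈ U ∧ (ep w (f w) i).2 ∈ U := by
    intro x hx
    simp only [VT, Finset.mem_sdiff, Finset.mem_filter, Finset.mem_univ, true_and] at hx
    obtain ⟨⟨y, z, hxy, hxz, hyz⟩, hxU⟩ := hx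
    have hxA : x ∉ A := fun h => hxU (hAU x h)
    have h1 : ∃ w ∈ A, s(y, z) ∈ te w (f w) := by
      by_contra hcon
      push Not at hcon
      have hdis : ∀ w ∈ A, Disjoint (te x (y, z)) (te w (f w)) := by
        intro w hw
        rw [Finset.disjoint_left]
        intro e he he'
        simp only [te, Finset.mem_insert, Finset.mem_singleton] at he
        rcases he with rfl | rfl | rfl
        · exact hxU (hteU w hw _ he' x (by simp))
        · exact hxU (hteU w hw _ he' x (by simp))
        · exact hcon w hw he'
      have hfu : ∀ w ∈ A, Function.update f x (y, z) w = f w := by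
        intro w hw
        rw [Function.update_of_ne]
        rintro rfl
        exact hxA hw
      have := hmax (insert x A, Function.update f x (y, z)) ?_
      · simp only [Finset.card_insert_of_notMem hxA] at this
        omega
      · refine ⟨?_, ?_⟩
        · intro w hw
          simp only [Finset.mem_insert] at hw
          rcases hw with rfl | hw
          · simp only [Function.update_self]
            exact ⟨hxy, hxz, hyz⟩
          · simp only [hfu w hw]
            exact hT w hw
        · intro w hw w' hw' hne
          simp only [Finset.mem_insert] at hw hw'
          rcases hw with rfl | hw
          · rcases hw' with rfl | hw'
            · exact absurd rfl hne
            · simp only [hfu w' hw', Function.update_self]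
              exact hdis w' hw'
          · rcases hw' with rfl | hw'
            · simp only [hfu w hw, Function.update_self]
              exact (hdis w hw).symm
            · simp only [hfu w hw, hfu w' hw']
              exact hD w hw w' hw' hne
    obtain ⟨w, hw, he⟩ := h1
    obtain ⟨i, hi⟩ := mem_ep he
    have hyU := hteU w hw _ he y (by simp)
    have hzU := hteU w hw _ he z (by simp)
    refine ⟨w, i, hw, ?_⟩
    have hne := hyz.ne
    rcases Sym2.eq_iff.1 hi with ⟨h1, h2⟩ | ⟨h1, h2⟩
    · rw [h1, h2]
      exact ⟨hxy, hxz, hne, hyU, hzU⟩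
    · rw [h1, h2]
      exact ⟨hxz, hxy, hne.symm, hzU, hyU⟩
  choose! gw gi hg using hC
  let c : Fin n → Cd n := fun v =>
    if v ∈ A then some (Sum.inl (f v)) else
      if v ∈ VT \ U then some (Sum.inr (gw v, gi v)) else none
  have hcA : ∀ v ∈ A, c v = some (Sum.inl (f v)) := fun v hv => by simp only [c, if_pos hv]
  have hAC : ∀ v ∈ VT \ U, v ∉ A := fun v hv h => (Finset.mem_sdiff.1 hv).2 (hAU v h)
  have hcC : ∀ v ∈ VT \ U, c v = some (Sum.inr (gw v, gi v)) := fun v hv => by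
    simp only [c, if_neg (hAC v hv), if_pos hv]
  have hcN : ∀ v, v ∉ A → v ∉ VT \ U → c v = none := fun v hv hv' => by
    simp only [c, if_neg hv, if_neg hv']
  have hceA : ∀ v ∈ A, ce c v = te v (f v) := fun v hv => by simp only [ce, hcA v hv]
  have hceC : ∀ v ∈ VT \ U, ce c v = we v (ep (gw v) (f (gw v)) (gi v)) := fun v hv => by
    simp only [ce, hcC v hv, hcA _ (hg v hv).1]
  have hceN : ∀ v, v ∉ A → v ∉ VT \ U → ce c v = ∅ := fun v hv hv' => by
    simp only [ce, hcN v hv hv']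
  have hAw : ∀ v ∈ A, ∀ v' ∈ VT \ U, Disjoint (ce c v) (ce c v') := by
    intro v hv v' hv'
    rw [hceA v hv, hceC v' hv', Finset.disjoint_left]
    intro e he he'
    refine (Finset.mem_sdiff.1 hv').2 (hteU v hv e he v' ?_)
    simp only [we, Finset.mem_insert, Finset.mem_singleton] at he'
    rcases he' with rfl | rfl <;> simp
  refine ⟨c, ?_, ?_, ?_⟩
  · intro e he
    obtain ⟨v, _, hv⟩ := Finset.mem_biUnion.1 he
    simp only [ef, Finset.mem_filter, Finset.mem_univ, true_and]
    by_cases hvA : v ∈ A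
    · rw [hceA v hvA] at hv
      obtain ⟨h1, h2, h3⟩ := hT v hvA
      simp only [te, Finset.mem_insert, Finset.mem_singleton] at hv
      rcases hv with rfl | rfl | rfl
      · exact h1
      · exact h2
      · exact h3
    · by_cases hvC : v ∈ VT \ U
      · rw [hceC v hvC] at hv
        obtain ⟨_, h1, h2, _⟩ := hg v hvC
        simp only [we, Finset.mem_insert, Finset.mem_singleton] at hv
        rcases hv with rfl | rfl
        · exact h1
        · exact h2
      · rw [hceN v hvA hvC] at hv
        simp at hv
  · unfold ae
    rw [Finset.card_biUnion]
    · apply Finset.sum_congr rfl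
      intro v _
      by_cases hvA : v ∈ A
      · rw [hceA v hvA, hcA v hvA]
        obtain ⟨h1, h2, h3⟩ := hT v hvA
        exact te_card h1 h2 h3
      · by_cases hvC : v ∈ VT \ U
        · rw [hceC v hvC, hcC v hvC]
          obtain ⟨_, h1, h2, h3, _⟩ := hg v hvC
          have a := h1.ne
          have b := h2.ne
          simp only [we, cost]
          apply Finset.card_pair
          simp
          grind
        · rw [hceN v hvA hvC, hcN v hvA hvC]
          rfl
    · intro v _ v' _ hne
      change Disjoint (ce c v) (ce c v')
      by_cases hvN : v ∉ A ∧ v ∉ VT \ U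
      · rw [hceN v hvN.1 hvN.2]; simp
      by_cases hvN' : v' ∉ A ∧ v' ∉ VT \ U
      · rw [hceN v' hvN'.1 hvN'.2]; simp
      by_cases hvA : v ∈ A
      · by_cases hvA' : v' ∈ A
        · rw [hceA v hvA, hceA v' hvA']
          exact hD v hvA v' hvA' hne
        · exact hAw v hvA v' (by tauto)
      · by_cases hvA' : v' ∈ A
        · exact (hAw v' hvA' v (by tauto)).symm
        · have hvC : v ∈ VT \ U := by tauto
          have hvC' : v' ∈ VT \ U := by tauto
          rw [hceC v hvC, hceC v' hvC', Finset.disjoint_left]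
          have hvU := (Finset.mem_sdiff.1 hvC).2
          obtain ⟨_, _, _, _, h1, h2⟩ := hg v' hvC'
          intro e he he'
          have hve : v ∈ e := by
            simp only [we, Finset.mem_insert, Finset.mem_singleton] at he
            rcases he with rfl | rfl <;> simp
          simp only [we, Finset.mem_insert, Finset.mem_singleton] at he'
          rcases he' with rfl | rfl
          · rcases Sym2.mem_iff.1 hve with h | h
            · exact hne h
            · exact hvU (h ▸ h1)
          · rcases Sym2.mem_iff.1 hve with h | h
            · exact hne h
            · exact hvU (h ▸ h2)
  · have h1 : vT G = VT.card := by
      simp only [vT, VT]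
      congr
    have h2 : VT.card ≤ (VT \ U).card + U.card := by
      rw [← Finset.card_union_of_disjoint Finset.sdiff_disjoint]
      apply Finset.card_le_card
      intro x hx
      simp only [Finset.mem_union, Finset.mem_sdiff]
      tauto
    have h3 : ∑ v, ind (c v) = (A ∪ VT \ U).card := by
      rw [Finset.card_eq_sum_ones, ← Finset.sum_subset (Finset.subset_univ (A ∪ VT \ U))]
      · apply Finset.sum_congr rfl
        intro v hv
        rcases Finset.mem_union.1 hv with h | h
        · rw [hcA v h]; rfl
        · rw [hcC v h]; rfl
      · intro v _ hv
        rw [Finset.mem_union, not_or] at hv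
        rw [hcN v hv.1 hv.2]; rfl
    have h4 : (A ∪ VT \ U).card = A.card + (VT \ U).card := by
      apply Finset.card_union_of_disjoint
      rw [Finset.disjoint_left]
      intro v hv hv'
      exact hAC v hv' hv
    omega

lemma upper {n : ℕ} {p : ℝ} (hp : 0 ≤ p) (hp1 : p ≤ 1) (hn : 1 ≤ n) :
    ergmZ n p (1 / 3 * Real.log n) ≤ (1 + (n * p) ^ 3 + 3 * (n * p) ^ 2) ^ n := by
  have hn0 : (0 : ℝ) < n := by exact_mod_cast hn
  have hn1 : (1 : ℝ) ≤ n := by exact_mod_cast hn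
  have h1 : ∀ G : SimpleGraph (Fin n), graphProb n p G * Real.exp (1 / 3 * Real.log n * vT G) ≤
      ∑ c : Fin n → Cd n, if (ae c).card = ∑ v, cost (c v) then
        (n : ℝ) ^ (∑ v, ind (c v)) * (if ae c ⊆ ef G then graphProb n p G else 0) else 0 := by
    intro G
    obtain ⟨c, hc1, hc2, hc3⟩ := exists_code_s19 G
    have hg := graphProb_nonneg hp hp1 G
    refine le_trans ?_ (Finset.single_le_sum (f := fun c : Fin n → Cd n =>
      if (ae c).card = ∑ v, cost (c v) then
        (n : ℝ) ^ (∑ v, ind (c v)) * (if ae c ⊆ ef G then graphProb n p G else 0) else 0)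
        ?_ (Finset.mem_univ c))
    · simp only [if_pos hc1, if_pos hc2]
      rw [mul_comm]
      apply mul_le_mul_of_nonneg_right _ hg
      rw [← Real.exp_log hn0, ← Real.exp_nat_mul, Real.log_exp]
      apply Real.exp_le_exp.2
      have h3 : (vT G : ℝ) ≤ 3 * (∑ v, ind (c v) : ℕ) := by exact_mod_cast hc3
      have hl := Real.log_nonneg hn1
      nlinarith
    · intro c _
      positivity
  unfold ergmZ
  refine (Finset.sum_le_sum (fun G _ => h1 G)).trans ?_
  rw [Finset.sum_comm]
  have h2 : ∀ c : Fin n → Cd n, (∑ G : SimpleGraph (Fin n), if (ae c).card = ∑ v, cost (c v) then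
        (n : ℝ) ^ (∑ v, ind (c v)) * (if ae c ⊆ ef G then graphProb n p G else 0) else 0) ≤
      ∏ v, ((n : ℝ) ^ ind (c v) * p ^ cost (c v)) := by
    intro c
    rw [Finset.prod_mul_distrib, Finset.prod_pow_eq_pow_sum, Finset.prod_pow_eq_pow_sum]
    split_ifs with h
    · rw [← Finset.mul_sum, ← h]
      apply mul_le_mul_of_nonneg_left (prob_sup hp _)
      positivity
    · simp
      positivity
  refine (Finset.sum_le_sum (fun c _ => h2 c)).trans ?_
  have h3 := Finset.prod_univ_sum (fun _ : Fin n => (Finset.univ : Finset (Cd n)))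
    (fun _ o => (n : ℝ) ^ ind o * p ^ cost o)
  rw [Fintype.piFinset_univ] at h3
  rw [← h3]
  simp only [Finset.prod_const, Finset.card_univ, Fintype.card_fin]
  apply le_of_eq
  congr 1
  rw [Fintype.sum_option, Fintype.sum_sum_type]
  simp [ind, cost]
  ring

/-! ### Lower bound -/

/-- First block. -/
def ba {n m : ℕ} (h : 3 * m ≤ n) (i : Fin m) : Fin n := ⟨i, by omega⟩
/-- Second block. -/
def bb {n m : ℕ} (h : 3 * m ≤ n) (i : Fin m) : Fin n := ⟨m + i, by omega⟩
/-- Third block. -/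
def bc {n m : ℕ} (h : 3 * m ≤ n) (i : Fin m) : Fin n := ⟨2 * m + i, by omega⟩

/-- Edges of the union of disjoint triangles. -/
def pe {n m : ℕ} (h : 3 * m ≤ n) (q : Equiv.Perm (Fin m) × Equiv.Perm (Fin m)) :
    Finset (Sym2 (Fin n)) :=
  Finset.univ.biUnion (fun i : Fin m => te (ba h i) (bb h (q.1 i), bc h (q.2 i)))

/-- The union of disjoint triangles. -/
def pg {n m : ℕ} (h : 3 * m ≤ n) (q : Equiv.Perm (Fin m) × Equiv.Perm (Fin m)) :
    SimpleGraph (Fin n) := SimpleGraph.fromEdgeSet (pe h q : Set (Sym2 (Fin n)))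

lemma pg_adj {n m : ℕ} (h : 3 * m ≤ n) (q : Equiv.Perm (Fin m) × Equiv.Perm (Fin m)) (i : Fin m) :
    (pg h q).Adj (ba h i) (bb h (q.1 i)) ∧ (pg h q).Adj (ba h i) (bc h (q.2 i)) ∧
      (pg h q).Adj (bb h (q.1 i)) (bc h (q.2 i)) := by
  have hm : ∀ e ∈ te (ba h i) (bb h (q.1 i), bc h (q.2 i)), e ∈ (pe h q : Set (Sym2 (Fin n))) := by
    intro e he
    rw [Finset.mem_coe]
    exact Finset.mem_biUnion.2 ⟨i, Finset.mem_univ _, he⟩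
  simp only [pg, SimpleGraph.fromEdgeSet_adj]
  refine ⟨⟨hm _ (by simp [te]), ?_⟩, ⟨hm _ (by simp [te]), ?_⟩, ⟨hm _ (by simp [te]), ?_⟩⟩ <;>
    simp only [ba, bb, bc, ne_eq, Fin.mk.injEq] <;> omega

lemma pg_adj_ab {n m : ℕ} (h : 3 * m ≤ n) (q : Equiv.Perm (Fin m) × Equiv.Perm (Fin m))
    (i j : Fin m) (hij : (pg h q).Adj (ba h i) (bb h j)) : j = q.1 i := by
  simp only [pg, SimpleGraph.fromEdgeSet_adj, Finset.mem_coe, pe, Finset.mem_biUnion, te,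
    Finset.mem_insert, Finset.mem_singleton, Sym2.eq_iff, ba, bb, bc, Fin.mk.injEq] at hij
  obtain ⟨⟨k, _, hk⟩, _⟩ := hij
  have hk' : i = k ∧ j = q.1 k := by
    constructor <;> apply Fin.ext <;> omega
  rw [hk'.2, hk'.1]

lemma pg_adj_ac {n m : ℕ} (h : 3 * m ≤ n) (q : Equiv.Perm (Fin m) × Equiv.Perm (Fin m))
    (i j : Fin m) (hij : (pg h q).Adj (ba h i) (bc h j)) : j = q.2 i := by
  simp only [pg, SimpleGraph.fromEdgeSet_adj, Finset.mem_coe, pe, Finset.mem_biUnion, te,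
    Finset.mem_insert, Finset.mem_singleton, Sym2.eq_iff, ba, bb, bc, Fin.mk.injEq] at hij
  obtain ⟨⟨k, _, hk⟩, _⟩ := hij
  have hk' : i = k ∧ j = q.2 k := by
    constructor <;> apply Fin.ext <;> omega
  rw [hk'.2, hk'.1]

lemma pg_inj {n m : ℕ} (h : 3 * m ≤ n) : Function.Injective (pg (n := n) (m := m) h) := by
  intro q r hqr
  apply Prod.ext
  · ext1 i
    have := (pg_adj h q i).1
    rw [hqr] at this
    exact pg_adj_ab h r _ _ this
  · ext1 i
    have := (pg_adj h q i).2.1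
    rw [hqr] at this
    exact pg_adj_ac h r _ _ this

lemma pg_edge {n m : ℕ} (h : 3 * m ≤ n) (q : Equiv.Perm (Fin m) × Equiv.Perm (Fin m)) :
    edgeCount (pg h q) ≤ 3 * m := by
  have h1 : edgeCount (pg h q) ≤ (pe h q).card := by
    apply Finset.card_le_card
    intro e he
    simp only [pg, SimpleGraph.edgeSet_fromEdgeSet, Finset.mem_filter, Finset.mem_univ,
      true_and] at he
    exact he.1
  have h2 : (pe h q).card ≤ (Finset.univ : Finset (Fin m)).card * 3 :=
    Finset.card_biUnion_le_card_mul _ _ _ (fun x _ => Finset.card_le_three)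
  rw [Finset.card_univ, Fintype.card_fin] at h2
  omega

lemma pg_vT {n m : ℕ} (h : 3 * m ≤ n) (q : Equiv.Perm (Fin m) × Equiv.Perm (Fin m)) :
    3 * m ≤ vT (pg h q) := by
  have h1 : (Finset.univ.map (Fin.castLEEmb h)).card = 3 * m := by simp
  rw [← h1]
  apply Finset.card_le_card
  intro v hv
  simp only [Finset.mem_map, Finset.mem_univ, true_and] at hv
  obtain ⟨⟨k, hk⟩, rfl⟩ := hv
  simp only [Finset.mem_filter, Finset.mem_univ, true_and]
  by_cases hk1 : k < m
  · obtain ⟨a, b, c⟩ := pg_adj h q ⟨k, hk1⟩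
    exact ⟨_, _, a, b, c⟩
  · by_cases hk2 : k < 2 * m
    · obtain ⟨a, b, c⟩ := pg_adj h q (q.1.symm ⟨k - m, by omega⟩)
      rw [Equiv.apply_symm_apply] at a c
      have e : bb h (⟨k - m, by omega⟩ : Fin m) = (Fin.castLEEmb h) ⟨k, hk⟩ := by
        apply Fin.ext; simp [bb]; omega
      rw [e] at a c
      exact ⟨_, _, a.symm, c, b⟩
    · obtain ⟨a, b, c⟩ := pg_adj h q (q.2.symm ⟨k - 2 * m, by omega⟩)
      rw [Equiv.apply_symm_apply] at b c
      have e : bc h (⟨k - 2 * m, by omega⟩ : Fin m) = (Fin.castLEEmb h) ⟨k, hk⟩ := by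
        apply Fin.ext; simp [bc]; omega
      rw [e] at b c
      exact ⟨_, _, b.symm, c.symm, a⟩

lemma lower {n m : ℕ} {p b : ℝ} (hp : 0 ≤ p) (hp1 : p ≤ 1) (hb : 0 ≤ b) (h : 3 * m ≤ n) :
    (m.factorial : ℝ) ^ 2 * (p ^ (3 * m) * (1 - p) ^ (n ^ 2) * Real.exp (b * (3 * m))) ≤
      ergmZ n p b := by
  have hp2 : 0 ≤ 1 - p := by linarith
  have h1 : (Finset.univ.image (pg (n := n) (m := m) h)).card = m.factorial ^ 2 := by
    rw [Finset.card_image_of_injective _ (pg_inj h), Finset.card_univ, Fintype.card_prod,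
      Fintype.card_perm, Fintype.card_fin, sq]
  have h2 : ∑ G ∈ Finset.univ.image (pg (n := n) (m := m) h),
      graphProb n p G * Real.exp (b * vT G) ≤ ergmZ n p b := by
    apply Finset.sum_le_sum_of_subset_of_nonneg (Finset.subset_univ _)
    intro G _ _
    have := graphProb_nonneg hp hp1 G
    positivity
  refine le_trans ?_ h2
  have h3 := Finset.card_nsmul_le_sum (Finset.univ.image (pg (n := n) (m := m) h))
    (fun G => graphProb n p G * Real.exp (b * vT G))
    (p ^ (3 * m) * (1 - p) ^ (n ^ 2) * Real.exp (b * (3 * m))) ?_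
  · rw [h1, nsmul_eq_mul] at h3
    push_cast at h3
    exact h3
  · intro G hG
    obtain ⟨q, _, rfl⟩ := Finset.mem_image.1 hG
    have e1 := pg_edge h q
    have e2 : (3 * m : ℝ) ≤ vT (pg h q) := by exact_mod_cast pg_vT h q
    have e3 : n.choose 2 - edgeCount (pg h q) ≤ n ^ 2 :=
      (Nat.sub_le _ _).trans (Nat.choose_le_pow n 2)
    unfold graphProb
    have f1 := pow_le_pow_of_le_one hp hp1 e1
    have f2 := pow_le_pow_of_le_one hp2 (by linarith) e3
    have f3 : Real.exp (b * (3 * m)) ≤ Real.exp (b * vT (pg h q)) :=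
      Real.exp_le_exp.2 (mul_le_mul_of_nonneg_left e2 hb)
    gcongr

lemma ergmZ_one_le {n : ℕ} {p b : ℝ} (hp : 0 ≤ p) (hp1 : p ≤ 1) (hb : 0 ≤ b) : 1 ≤ ergmZ n p b := by
  rw [← prob_total n p]
  apply Finset.sum_le_sum
  intro G _
  have h1 := graphProb_nonneg hp hp1 G
  have h2 : 1 ≤ Real.exp (b * vT G) := Real.one_le_exp (by positivity)
  nlinarith

lemma vT_le {n : ℕ} (G : SimpleGraph (Fin n)) : vT G ≤ n := by
  unfold vT
  refine (Finset.card_le_univ _).trans ?_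
  rw [Fintype.card_fin]

/-- General tilt comparison. -/
lemma tilt {n : ℕ} {p β s : ℝ} (hp : 0 ≤ p) (hp1 : p ≤ 1) (hn : 1 ≤ n)
    (A : Set (SimpleGraph (Fin n)))
    (hA : ∀ G ∈ A, (β - 1 / 3) * vT G ≤ s * n) :
    (∑ G : SimpleGraph (Fin n), if G ∈ A then
      graphProb n p G * Real.exp (β * Real.log n * vT G) else 0) ≤
      Real.exp (s * n * Real.log n) * (1 + (n * p) ^ 3 + 3 * (n * p) ^ 2) ^ n := by
  refine le_trans ?_ (mul_le_mul_of_nonneg_left (upper hp hp1 hn) (Real.exp_pos _).le)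
  unfold ergmZ
  rw [Finset.mul_sum]
  apply Finset.sum_le_sum
  intro G _
  have h1 := graphProb_nonneg hp hp1 G
  split_ifs with hG
  · rw [mul_left_comm, ← Real.exp_add]
    apply mul_le_mul_of_nonneg_left _ h1
    apply Real.exp_le_exp.2
    have hl : 0 ≤ Real.log n := Real.log_nonneg (by exact_mod_cast hn)
    have := mul_le_mul_of_nonneg_right (hA G hG) hl
    nlinarith
  · positivity

/-- Logarithmic lower bound. -/
lemma log_lower {l β : ℝ} (hl : 0 < l) (hβ : 1 / 3 ≤ β) :
    ∃ C : ℝ, 0 ≤ C ∧ ∀ᶠ n : ℕ in atTop,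
      (β - 1 / 3) * (n - 2) * Real.log n - C * n ≤ Real.log (ergmZ n (l / n) (β * Real.log n)) := by
  refine ⟨2 * Real.log 6 + 2 + 3 * |Real.log l| + 2 * l, by positivity, ?_⟩
  filter_upwards [eventually_ge_atTop 6, eventually_ge_atTop (⌈2 * l⌉₊)] with n hn6 hnl
  have hnl' : 2 * l ≤ n := (Nat.le_ceil _).trans (by exact_mod_cast hnl)
  have hn6' : (6 : ℝ) ≤ n := by exact_mod_cast hn6
  have hn0 : (0 : ℝ) < n := by linarith
  obtain ⟨m, hm⟩ : ∃ m, m = n / 3 := ⟨_, rfl⟩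
  have hm1 : 3 * m ≤ n := by omega
  have hm2 : n ≤ 3 * m + 2 := by omega
  have hm3 : n ≤ 6 * m := by omega
  have hm1' : (3 : ℝ) * m ≤ n := by exact_mod_cast hm1
  have hm2' : (n : ℝ) ≤ 3 * m + 2 := by exact_mod_cast hm2
  have hm3' : (n : ℝ) ≤ 6 * m := by exact_mod_cast hm3
  have hm0 : (0 : ℝ) < m := by linarith
  have hp0 : 0 < l / n := by positivity
  have hp12 : l / n ≤ 1 / 2 := by rw [div_le_iff₀ hn0]; linarith
  have hlog : 0 ≤ Real.log n := Real.log_nonneg (by linarith)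
  have hlow := lower (n := n) (m := m) (p := l / n) (b := β * Real.log n) hp0.le (by linarith)
    (by positivity) hm1
  have h1p : 0 < 1 - l / n := by linarith
  have hfac : (0 : ℝ) < m.factorial := by exact_mod_cast m.factorial_pos
  have hlow2 := Real.log_le_log (by positivity) hlow
  refine le_trans ?_ hlow2
  rw [Real.log_mul (by positivity) (by positivity), Real.log_mul (by positivity) (by positivity),
    Real.log_mul (by positivity) (by positivity), Real.log_exp, Real.log_pow, Real.log_pow,
    Real.log_pow, Real.log_div hl.ne' hn0.ne']
  have a1 : (m : ℝ) * Real.log m - m ≤ Real.log m.factorial := by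
    have h := Real.pow_div_factorial_le_exp (m : ℝ) hm0.le m
    have h' := Real.log_le_log (by positivity) h
    rw [Real.log_exp, Real.log_div (by positivity) (by positivity), Real.log_pow] at h'
    linarith
  have a2 : Real.log n - Real.log 6 ≤ Real.log m := by
    have := Real.log_le_log hn0 hm3'
    rw [Real.log_mul (by norm_num) hm0.ne'] at this
    linarith
  have a3 : -(2 * l / n) ≤ Real.log (1 - l / n) := by
    have := Real.one_sub_inv_le_log_of_pos h1p
    refine le_trans ?_ this
    have : (1 - l / n)⁻¹ ≤ 1 + 2 * (l / n) := by
      rw [inv_le_iff_one_le_mul₀ h1p]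
      nlinarith
    have e : 2 * l / n = 2 * (l / n) := by ring
    rw [e]
    linarith
  have a4 : -(2 * l) * n ≤ (n ^ 2 : ℕ) * Real.log (1 - l / n) := by
    push_cast
    have := mul_le_mul_of_nonneg_left a3 (sq_nonneg (n : ℝ))
    refine le_trans (le_of_eq ?_) this
    field_simp
  have a5 : -|Real.log l| ≤ Real.log l := neg_abs_le _
  have a6 : (m : ℝ) * (Real.log n - Real.log 6) ≤ m * Real.log m :=
    mul_le_mul_of_nonneg_left a2 hm0.le
  have a7 : (m : ℝ) * -|Real.log l| ≤ m * Real.log l := mul_le_mul_of_nonneg_left a5 hm0.le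
  have hmn : (m : ℝ) ≤ n := by linarith
  have a8 : (m : ℝ) * |Real.log l| ≤ n * |Real.log l| :=
    mul_le_mul_of_nonneg_right hmn (abs_nonneg _)
  have hlog6 : 0 ≤ Real.log 6 := Real.log_nonneg (by norm_num)
  have a9 : (m : ℝ) * Real.log 6 ≤ n * Real.log 6 := mul_le_mul_of_nonneg_right hmn hlog6
  have a10 : (β - 1 / 3) * (n - 2) * Real.log n ≤ (β - 1 / 3) * (3 * m) * Real.log n := by
    apply mul_le_mul_of_nonneg_right _ hlog
    apply mul_le_mul_of_nonneg_left _ (by linarith)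
    linarith
  push_cast at a4 ⊢
  nlinarith

lemma tendsto_exp_aux (C d : ℝ) (hd : 0 < d) :
    Tendsto (fun n : ℕ => Real.exp (n * (C - d * Real.log n))) atTop (nhds 0) := by
  apply Real.tendsto_exp_atBot.comp
  have h1 : Tendsto (fun n : ℕ => Real.log (n : ℝ)) atTop atTop :=
    Real.tendsto_log_atTop.comp tendsto_natCast_atTop_atTop
  have h2 : Tendsto (fun n : ℕ => C - d * Real.log (n : ℝ)) atTop atBot := by
    have := tendsto_atBot_add_const_left atTop C
      (tendsto_neg_atTop_atBot.comp (h1.const_mul_atTop hd))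
    simpa [sub_eq_add_neg] using this
  exact tendsto_natCast_atTop_atTop.atTop_mul_atBot₀ h2

/-- **Phase transition in the exponential random graph tilted by the
number of vertices in triangles.** -/
theorem ergm_phase_transition (l β : ℝ) (hl : 0 < l) (hβ : 0 ≤ β) :
    Tendsto (fun n : ℕ =>
        Real.log (ergmZ n (l / n) (β * Real.log n)) / ((n : ℝ) * Real.log n))
      atTop (nhds (max (β - 1 / 3) 0)) ∧
    (β < 1 / 3 → ∀ ε : ℝ, 0 < ε →
      Tendsto (fun n : ℕ =>
          ergmProb n (l / n) (β * Real.log n) {G | ε ≤ (vT G : ℝ) / n})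
        atTop (nhds 0)) ∧
    (1 / 3 < β → ∀ ε : ℝ, 0 < ε →
      Tendsto (fun n : ℕ =>
          ergmProb n (l / n) (β * Real.log n) {G | (vT G : ℝ) / n < 1 - ε})
        atTop (nhds 0)) := by
  obtain ⟨K, hK⟩ : ∃ K : ℝ, K = 1 + l ^ 3 + 3 * l ^ 2 := ⟨_, rfl⟩
  have hK1 : 1 ≤ K := by rw [hK]; nlinarith [pow_pos hl 3, pow_pos hl 2]
  have hK0 : 0 < K := by linarith
  have hKn : ∀ n : ℕ, K ^ n = Real.exp (n * Real.log K) := by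
    intro n
    rw [Real.exp_nat_mul, Real.exp_log hK0]
  have hlogK : 0 ≤ Real.log K := Real.log_nonneg hK1
  have hbase : ∀ᶠ n : ℕ in atTop, 3 ≤ n ∧ 0 ≤ l / n ∧ l / n ≤ 1 ∧ n * (l / n) = l := by
    filter_upwards [eventually_ge_atTop 3, eventually_ge_atTop (⌈l⌉₊)] with n hn hnl
    have hnl' : l ≤ n := (Nat.le_ceil _).trans (by exact_mod_cast hnl)
    have hn0 : (0 : ℝ) < n := by
      have : 0 < n := by omega
      exact_mod_cast this
    refine ⟨hn, by positivity, ?_, by field_simp⟩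
    rw [div_le_one hn0]
    exact hnl'
  have hlogt : Tendsto (fun n : ℕ => Real.log (n : ℝ)) atTop atTop :=
    Real.tendsto_log_atTop.comp tendsto_natCast_atTop_atTop
  refine ⟨?_, ?_, ?_⟩
  · -- limit of the free energy
    obtain ⟨θ, hθ⟩ : ∃ θ : ℝ, θ = max (β - 1 / 3) 0 := ⟨_, rfl⟩
    rw [← hθ]
    have hθ0 : 0 ≤ θ := by rw [hθ]; exact le_max_right _ _
    have hlow : ∃ C : ℝ, 0 ≤ C ∧ ∀ᶠ n : ℕ in atTop,
        θ * (n - 2) * Real.log n - C * n ≤ Real.log (ergmZ n (l / n) (β * Real.log n)) := by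
      by_cases hb : 1 / 3 ≤ β
      · have : θ = β - 1 / 3 := by rw [hθ]; exact max_eq_left (by linarith)
        rw [this]
        exact log_lower hl hb
      · have : θ = 0 := by rw [hθ]; exact max_eq_right (by linarith)
        rw [this]
        refine ⟨0, le_refl _, ?_⟩
        filter_upwards [hbase] with n hn
        have hlog : 0 ≤ Real.log n := Real.log_nonneg (by exact_mod_cast (by omega : 1 ≤ n))
        have := Real.log_nonneg (ergmZ_one_le (n := n) hn.2.1 hn.2.2.1 (mul_nonneg hβ hlog))
        simpa using this
    obtain ⟨C, hC0, hC⟩ := hlow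
    have hlo : Tendsto (fun n : ℕ => θ * (1 - 2 / (n : ℝ)) - C / Real.log n) atTop (nhds θ) := by
      have h1 : Tendsto (fun n : ℕ => 2 / (n : ℝ)) atTop (nhds 0) :=
        tendsto_const_nhds.div_atTop tendsto_natCast_atTop_atTop
      have h2 : Tendsto (fun n : ℕ => C / Real.log (n : ℝ)) atTop (nhds 0) :=
        tendsto_const_nhds.div_atTop hlogt
      have := ((h1.const_sub 1).const_mul θ).sub h2
      simpa using this
    have hup : Tendsto (fun n : ℕ => θ + Real.log K / Real.log n) atTop (nhds θ) := by
      have h2 : Tendsto (fun n : ℕ => Real.log K / Real.log (n : ℝ)) atTop (nhds 0) :=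
        tendsto_const_nhds.div_atTop hlogt
      simpa using h2.const_add θ
    refine tendsto_of_tendsto_of_tendsto_of_le_of_le' hlo hup ?_ ?_
    · filter_upwards [hbase, hC] with n hn hCn
      have hn0 : (0 : ℝ) < n := by exact_mod_cast (by omega : 0 < n)
      have hlog : 0 < Real.log n := Real.log_pos (by exact_mod_cast (by omega : 1 < n))
      rw [le_div_iff₀ (by positivity)]
      refine le_trans (le_of_eq ?_) hCn
      field_simp
    · filter_upwards [hbase] with n hn
      have hn0 : (0 : ℝ) < n := by exact_mod_cast (by omega : 0 < n)
      have hlog : 0 < Real.log n := Real.log_pos (by exact_mod_cast (by omega : 1 < n))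
      rw [div_le_iff₀ (by positivity)]
      have ht := tilt (n := n) (p := l / n) (β := β) (s := θ) hn.2.1 hn.2.2.1 (by omega) Set.univ ?_
      · simp only [Set.mem_univ, if_true] at ht
        rw [hn.2.2.2, ← hK, hKn, ← Real.exp_add] at ht
        have hZ1 := ergmZ_one_le (n := n) hn.2.1 hn.2.2.1 (mul_nonneg hβ hlog.le)
        have := Real.log_le_log (lt_of_lt_of_le one_pos hZ1) ht
        rw [Real.log_exp] at this
        refine le_trans this (le_of_eq ?_)
        field_simp
      · intro G _
        have h1 : (vT G : ℝ) ≤ n := by exact_mod_cast vT_le G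
        have h2 : β - 1 / 3 ≤ θ := by rw [hθ]; exact le_max_left _ _
        have h3 : (0 : ℝ) ≤ vT G := Nat.cast_nonneg _
        exact mul_le_mul h2 h1 h3 hθ0
  · intro hb ε hε
    refine squeeze_zero' ?_ ?_ (tendsto_exp_aux (Real.log K) ((1 / 3 - β) * ε)
      (mul_pos (by linarith) hε))
    · filter_upwards [hbase] with n hn
      apply div_nonneg
      · apply Finset.sum_nonneg
        intro G _
        have := graphProb_nonneg hn.2.1 hn.2.2.1 G
        split_ifs <;> positivity
      · apply Finset.sum_nonneg
        intro G _
        have := graphProb_nonneg hn.2.1 hn.2.2.1 G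
        positivity
    · filter_upwards [hbase] with n hn
      have hn0 : (0 : ℝ) < n := by exact_mod_cast (by omega : 0 < n)
      have hlog : 0 < Real.log n := Real.log_pos (by exact_mod_cast (by omega : 1 < n))
      have hZ1 := ergmZ_one_le (n := n) hn.2.1 hn.2.2.1 (mul_nonneg hβ hlog.le)
      have ht := tilt (n := n) (p := l / n) (β := β) (s := (β - 1 / 3) * ε) hn.2.1 hn.2.2.1
        (by omega) {G | ε ≤ (vT G : ℝ) / n} ?_
      · rw [hn.2.2.2, ← hK, hKn, ← Real.exp_add] at ht
        unfold ergmProb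
        rw [div_le_iff₀ (by linarith)]
        refine ht.trans ?_
        have e : (β - 1 / 3) * ε * n * Real.log n + n * Real.log K =
          n * (Real.log K - (1 / 3 - β) * ε * Real.log n) := by ring
        rw [e]
        exact le_mul_of_one_le_right (Real.exp_pos _).le hZ1
      · intro G hG
        rw [Set.mem_ofPred_eq, le_div_iff₀ hn0] at hG
        nlinarith
  · intro hb ε hε
    obtain ⟨C, hC0, hC⟩ := log_lower hl hb.le
    refine squeeze_zero' ?_ ?_ (tendsto_exp_aux (Real.log K + C + 2 * (β - 1 / 3))
      ((β - 1 / 3) * ε) (mul_pos (by linarith) hε))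
    · filter_upwards [hbase] with n hn
      apply div_nonneg
      · apply Finset.sum_nonneg
        intro G _
        have := graphProb_nonneg hn.2.1 hn.2.2.1 G
        split_ifs <;> positivity
      · apply Finset.sum_nonneg
        intro G _
        have := graphProb_nonneg hn.2.1 hn.2.2.1 G
        positivity
    · filter_upwards [hbase, hC] with n hn hCn
      have hn0 : (0 : ℝ) < n := by exact_mod_cast (by omega : 0 < n)
      have hlog : 0 < Real.log n := Real.log_pos (by exact_mod_cast (by omega : 1 < n))
      have hZ1 := ergmZ_one_le (n := n) hn.2.1 hn.2.2.1 (mul_nonneg hβ hlog.le)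
      have ht := tilt (n := n) (p := l / n) (β := β) (s := (β - 1 / 3) * (1 - ε)) hn.2.1 hn.2.2.1
        (by omega) {G | (vT G : ℝ) / n < 1 - ε} ?_
      · rw [hn.2.2.2, ← hK, hKn, ← Real.exp_add] at ht
        unfold ergmProb
        rw [div_le_iff₀ (by linarith)]
        refine ht.trans ?_
        have hZe := (Real.le_log_iff_exp_le (by linarith)).1 hCn
        refine le_trans ?_ (mul_le_mul_of_nonneg_left hZe (Real.exp_pos _).le)
        rw [← Real.exp_add]
        apply Real.exp_le_exp.2
        have hlogn : Real.log n ≤ n := Real.log_le_self hn0.le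
        have := mul_le_mul_of_nonneg_left hlogn (by linarith : 0 ≤ β - 1 / 3)
        nlinarith
      · intro G hG
        rw [Set.mem_ofPred_eq, div_lt_iff₀ hn0] at hG
        nlinarith
end
end
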